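/- Let N ≥ 2 and a ∈ L^∞ S^m_1(n,N) with m < 0. Suppose the phase functions φ_j ∈ C^∞(ℝⁿ×ℝⁿ), j = 1,…,N, satisfy the SND condition and |∂_x^α ∂_ξ^β φ_j(x,ξ)| ≤ C_{j,α,β} for all x, ξ and all multi-indices α, β with |α|+|β| ≥ 2 (no homogeneity is assumed). Then the multilinear FIO T_a(f₁,…,f_N)(x) = ∫_{ℝ^{Nn}} a(x,ξ₁,…,ξ_N) e^{iΣ_j φ_j(x,ξ_j)} ∏_j f̂_j(ξ_j) dξ₁⋯dξ_N is bounded from L²(ℝⁿ) × ⋯ × L²(ℝⁿ) to L^{2/N}(ℝⁿ): ‖T_a(f₁,…,f_N)‖_{L^{2/N}} ≤ C ∏_j ‖f_j‖_{L²} for all Schwartz f₁,…,f_N. -/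

import Mathlib

open MeasureTheory Real Complex
open scoped ENNReal NNReal RealInnerProductSpace SchwartzMap Classical

noncomputable section

/-- `ℝⁿ` as a Euclidean space. -/
abbrev En (n : ℕ) : Type := EuclideanSpace ℝ (Fin n)

/-- Partial derivative in the `i`-th coordinate direction. -/
def pd {n : ℕ} {F : Type} [NormedAddCommGroup F] [NormedSpace ℝ F]
    (i : Fin n) (f : En n → F) : En n → F :=
  fun x => fderiv ℝ f x (EuclideanSpace.single i 1)

/-- Multi-index partial derivative `∂^α`. -/
def mderiv {n : ℕ} {F : Type} [NormedAddCommGroup F] [NormedSpace ℝ F]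
    (α : Fin n → ℕ) (f : En n → F) : En n → F :=
  (List.finRange n).foldr (fun i g => (pd i)^[α i] g) f

/-- The order `|α|` of a multi-index. -/
def mdeg {n : ℕ} (α : Fin n → ℕ) : ℕ := ∑ i, α i

/-- The finite set of multi-indices `α` with every entry `≤ k` and `|α| ≤ k`;
this enumerates all multi-indices of order at most `k`. -/
def multiIdx (n k : ℕ) : Finset (Fin n → ℕ) :=
  (Fintype.piFinset fun _ : Fin n => Finset.range (k + 1)).filter fun α => mdeg α ≤ k

/-- Japanese bracket `⟨ξ⟩^t = (1+|ξ|²)^{t/2}`. -/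
def jb {n : ℕ} (ξ : En n) (t : ℝ) : ℝ := (1 + ‖ξ‖ ^ 2) ^ (t / 2)

/-- The rough amplitude class `L^p S^m_ρ`. -/
def LpSm {n : ℕ} (p : ℝ≥0∞) (m ρ : ℝ) (a : En n → En n → ℂ) : Prop :=
  (∀ x, ContDiff ℝ (⊤ : ℕ∞) (a x)) ∧
  (∀ (α : Fin n → ℕ) (ξ : En n), AEStronglyMeasurable (fun x => mderiv α (a x) ξ) volume) ∧
  ∀ α : Fin n → ℕ, ∃ C : ℝ, ∀ ξ : En n,
    eLpNorm (fun x => mderiv α (a x) ξ) p volume ≤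
      ENNReal.ofReal (C * jb ξ (m - ρ * (mdeg α : ℝ)))

/-- The seminorms `|a|_{p,m,s}` of an amplitude in `L^p S^m_ρ`. -/
def aSemi {n : ℕ} (p : ℝ≥0∞) (m ρ : ℝ) (s : ℕ) (a : En n → En n → ℂ) : ℝ≥0∞ :=
  ∑ α ∈ multiIdx n s, ⨆ ξ : En n,
    ENNReal.ofReal (jb ξ (ρ * (mdeg α : ℝ) - m)) *
      eLpNorm (fun x => mderiv α (a x) ξ) p volume

/-- The mixed derivative `∂_ξ^α ∂_x^β φ(x,ξ)`. -/
def mixedD {n : ℕ} (α β : Fin n → ℕ) (φ : En n → En n → ℝ) (x ξ : En n) : ℝ :=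
  mderiv α (fun ζ => mderiv β (fun y => φ y ζ) x) ξ

/-- The phase function class `Φ^k`. -/
def PhiClass {n : ℕ} (k : ℕ) (φ : En n → En n → ℝ) : Prop :=
  ContDiffOn ℝ (⊤ : ℕ∞) (fun q : En n × En n => φ q.1 q.2) {q | q.2 ≠ 0} ∧
  (∀ (x ξ : En n) (t : ℝ), 0 < t → φ x (t • ξ) = t * φ x ξ) ∧
  ∀ α β : Fin n → ℕ, k ≤ mdeg α + mdeg β →
    ∃ C : ℝ, ∀ (x ξ : En n), ξ ≠ 0 →
      ‖ξ‖ ^ ((mdeg α : ℝ) - 1) * |mixedD α β φ x ξ| ≤ C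

/-- The mixed Hessian matrix `[∂²φ/∂x_j∂ξ_k]`. -/
def mixHess {n : ℕ} (φ : En n → En n → ℝ) (x ξ : En n) : Matrix (Fin n) (Fin n) ℝ :=
  Matrix.of fun j k => pd j (fun y => pd k (φ y) ξ) x

/-- The strong non-degeneracy (SND) condition. -/
def SNDcond {n : ℕ} (φ : En n → En n → ℝ) : Prop :=
  ∃ c : ℝ, 0 < c ∧ ∀ (x ξ : En n), ξ ≠ 0 → c ≤ |(mixHess φ x ξ).det|

/-- The Fourier transform `f̂(ξ) = ∫ e^{-i⟨y,ξ⟩} f(y) dy`. -/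
def ft {n : ℕ} (f : En n → ℂ) (ξ : En n) : ℂ :=
  ∫ y : En n, Complex.exp (-(Complex.I * Complex.ofReal ⟪y, ξ⟫)) * f y

/-- The linear Fourier integral operator
`T_a f(x) = (2π)^{-n} ∫ e^{iφ(x,ξ)} a(x,ξ) f̂(ξ) dξ`. -/
def fio {n : ℕ} (a : En n → En n → ℂ) (φ : En n → En n → ℝ) (f : En n → ℂ)
    (x : En n) : ℂ :=
  (((2 * Real.pi) ^ n)⁻¹ : ℝ) •
    ∫ ξ : En n, Complex.exp (Complex.I * Complex.ofReal (φ x ξ)) * a x ξ * ft f ξ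

/-- The conjugate exponent `p′` of `p ∈ [1,∞]`. -/
def pconj (p : ℝ≥0∞) : ℝ≥0∞ := (1 - p⁻¹)⁻¹

/-- The order `𝔪(ρ,p,q)` from Definition 4.6. -/
def frakm (n : ℕ) (ρ : ℝ) (p q : ℝ≥0∞) : ℝ :=
  if p < 2 ∨ (2 ≤ p ∧ q < pconj p) then
    (n : ℝ) * (ρ - 1) * (min p q)⁻¹.toReal -
      (((n : ℝ) - 1) / 2) * (p⁻¹.toReal + (min p q)⁻¹.toReal)
  else if 2 ≤ q then
    (n : ℝ) * (ρ - 1) / 2 - ((n : ℝ) - 1) * (1 / 2 - q⁻¹.toReal)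
  else
    (n : ℝ) * (ρ - 1) * q⁻¹.toReal -
      (((n : ℝ) - 1) / (1 - 2 * p⁻¹.toReal)) * (q⁻¹.toReal - 1 / 2)

/-- The order `ℳ(ρ,p,q)` from Definition 4.6. -/
def scrM (n : ℕ) (ρ : ℝ) (p q : ℝ≥0∞) : ℝ :=
  (n : ℝ) * (ρ - 1) * q⁻¹.toReal -
    (((n : ℝ) - 1) / (1 + p⁻¹.toReal)) * (q⁻¹.toReal - 1 / 2)

/-- The distribution function `λ_f(s) = |{x : |f(x)| > s}|`. -/
def distFn {n : ℕ} (f : En n → ℂ) (s : ℝ) : ℝ≥0∞ := volume {x : En n | s < ‖f x‖}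

/-- The decreasing rearrangement `f*`. -/
def rearr {n : ℕ} (f : En n → ℂ) (t : ℝ) : ℝ :=
  sInf {s : ℝ | 0 ≤ s ∧ distFn f s ≤ ENNReal.ofReal t}

/-- The Lorentz space quasinorm
`‖f‖_{L^{r,q}} = (∫_0^∞ (t^{1/r} f*(t))^q dt/t)^{1/q}`. -/
def lorentzNorm {n : ℕ} (r q : ℝ≥0∞) (f : En n → ℂ) : ℝ≥0∞ :=
  (∫⁻ t in Set.Ioi (0 : ℝ),
      ENNReal.ofReal ((t ^ r⁻¹.toReal * rearr f t) ^ q.toReal / t)) ^ q⁻¹.toReal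

/-- Mixed frequency derivatives `∂_ξ^{α₁} ∂_η^{α₂} a(x,ξ,η)` of a bilinear amplitude. -/
def d2 {n : ℕ} (α₁ α₂ : Fin n → ℕ) (a : En n → En n → En n → ℂ)
    (x ξ η : En n) : ℂ :=
  mderiv α₁ (fun ζ => mderiv α₂ (fun θ => a x ζ θ) η) ξ

/-- Mixed derivatives `∂_x^β ∂_ξ^{α₁} ∂_η^{α₂} a(x,ξ,η)` of a bilinear amplitude. -/
def d3 {n : ℕ} (β α₁ α₂ : Fin n → ℕ) (a : En n → En n → En n → ℂ)
    (x ξ η : En n) : ℂ :=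
  mderiv β (fun y => d2 α₁ α₂ a y ξ η) x

/-- The bilinear product-type rough amplitude class `L^p_Π S^{(m₁,m₂)}_{(ρ₁,ρ₂)}(n,2)`. -/
def LpPiSm2 {n : ℕ} (p : ℝ≥0∞) (m₁ m₂ ρ₁ ρ₂ : ℝ) (a : En n → En n → En n → ℂ) : Prop :=
  (∀ x, ContDiff ℝ (⊤ : ℕ∞) (fun q : En n × En n => a x q.1 q.2)) ∧
  (∀ (α₁ α₂ : Fin n → ℕ) (ξ η : En n),
    AEStronglyMeasurable (fun x => d2 α₁ α₂ a x ξ η) volume) ∧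
  ∀ α₁ α₂ : Fin n → ℕ, ∃ C : ℝ, ∀ ξ η : En n,
    eLpNorm (fun x => d2 α₁ α₂ a x ξ η) p volume ≤
      ENNReal.ofReal (C * jb ξ (m₁ - ρ₁ * (mdeg α₁ : ℝ)) * jb η (m₂ - ρ₂ * (mdeg α₂ : ℝ)))

/-- The bilinear rough amplitude class `L^p S^m_ρ(n,2)`. -/
def LpSm2 {n : ℕ} (p : ℝ≥0∞) (m ρ : ℝ) (a : En n → En n → En n → ℂ) : Prop :=
  (∀ x, ContDiff ℝ (⊤ : ℕ∞) (fun q : En n × En n => a x q.1 q.2)) ∧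
  (∀ (α₁ α₂ : Fin n → ℕ) (ξ η : En n),
    AEStronglyMeasurable (fun x => d2 α₁ α₂ a x ξ η) volume) ∧
  ∀ α₁ α₂ : Fin n → ℕ, ∃ C : ℝ, ∀ ξ η : En n,
    eLpNorm (fun x => d2 α₁ α₂ a x ξ η) p volume ≤
      ENNReal.ofReal (C * (1 + ‖ξ‖ + ‖η‖) ^ (m - ρ * ((mdeg α₁ : ℝ) + (mdeg α₂ : ℝ))))

/-- The bilinear Hörmander class `S^m_{ρ,δ}(n,2)`. -/
def HormS2 {n : ℕ} (m ρ δ : ℝ) (a : En n → En n → En n → ℂ) : Prop :=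
  ContDiff ℝ (⊤ : ℕ∞) (fun q : En n × En n × En n => a q.1 q.2.1 q.2.2) ∧
  ∀ β α₁ α₂ : Fin n → ℕ, ∃ C : ℝ, ∀ x ξ η : En n,
    ‖d3 β α₁ α₂ a x ξ η‖ ≤
      C * (1 + ‖ξ‖ + ‖η‖) ^ (m - ρ * ((mdeg α₁ : ℝ) + (mdeg α₂ : ℝ)) + δ * (mdeg β : ℝ))

/-- The bilinear Fourier integral operator
`T_a(f,g)(x) = ∫∫ a(x,ξ,η) e^{iφ₁(x,ξ)+iφ₂(x,η)} f̂(ξ) ĝ(η) dξ dη`. -/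
def bfio {n : ℕ} (a : En n → En n → En n → ℂ) (φ₁ φ₂ : En n → En n → ℝ)
    (f g : En n → ℂ) (x : En n) : ℂ :=
  ∫ w : En n × En n,
    a x w.1 w.2 * Complex.exp (Complex.I * Complex.ofReal (φ₁ x w.1 + φ₂ x w.2)) *
      ft f w.1 * ft g w.2

/-- Partial derivative of a function of `N` frequency variables in the `i`-th coordinate
of the `j`-th variable. -/
def pdN {n N : ℕ} (j : Fin N) (i : Fin n) (g : (Fin N → En n) → ℂ) :
    (Fin N → En n) → ℂ :=
  fun ξ => fderiv ℝ g ξ (Pi.single j (EuclideanSpace.single i 1))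

/-- Multi-index derivative `∂_{ξ₁}^{A 1} ⋯ ∂_{ξ_N}^{A N}`. -/
def mderivN {n N : ℕ} (A : Fin N → Fin n → ℕ) (g : (Fin N → En n) → ℂ) :
    (Fin N → En n) → ℂ :=
  (List.finRange N).foldr
    (fun j h => (List.finRange n).foldr (fun i h' => (pdN j i)^[A j i] h') h) g

/-- The multilinear product-type rough amplitude class `L^p_Π S^{m⃗}_{ρ⃗}(n,N)`. -/
def LpPiSmN {n N : ℕ} (p : ℝ≥0∞) (m ρ : Fin N → ℝ)
    (a : En n → (Fin N → En n) → ℂ) : Prop :=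
  (∀ x, ContDiff ℝ (⊤ : ℕ∞) (a x)) ∧
  (∀ (A : Fin N → Fin n → ℕ) (ξ : Fin N → En n),
    AEStronglyMeasurable (fun x => mderivN A (a x) ξ) volume) ∧
  ∀ A : Fin N → Fin n → ℕ, ∃ C : ℝ, ∀ ξ : Fin N → En n,
    eLpNorm (fun x => mderivN A (a x) ξ) p volume ≤
      ENNReal.ofReal (C * ∏ j, jb (ξ j) (m j - ρ j * (mdeg (A j) : ℝ)))

/-- The multilinear rough amplitude class `L^p S^m_ρ(n,N)`. -/
def LpSmN {n N : ℕ} (p : ℝ≥0∞) (m ρ : ℝ) (a : En n → (Fin N → En n) → ℂ) : Prop :=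
  (∀ x, ContDiff ℝ (⊤ : ℕ∞) (a x)) ∧
  (∀ (A : Fin N → Fin n → ℕ) (ξ : Fin N → En n),
    AEStronglyMeasurable (fun x => mderivN A (a x) ξ) volume) ∧
  ∀ A : Fin N → Fin n → ℕ, ∃ C : ℝ, ∀ ξ : Fin N → En n,
    eLpNorm (fun x => mderivN A (a x) ξ) p volume ≤
      ENNReal.ofReal (C * (1 + ∑ j, ‖ξ j‖) ^ (m - ρ * ∑ j, (mdeg (A j) : ℝ)))

/-- The multilinear Fourier integral operator. -/
def mfio {n N : ℕ} (a : En n → (Fin N → En n) → ℂ) (φ : Fin N → En n → En n → ℝ)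
    (f : Fin N → En n → ℂ) (x : En n) : ℂ :=
  ∫ ξ : Fin N → En n,
    a x ξ * Complex.exp (Complex.I * Complex.ofReal (∑ j, φ j x (ξ j))) *
      ∏ j, ft (f j) (ξ j)

/-- The Sobolev (Bessel potential) norm `‖f‖_{H^{s,q}} = ‖ℱ^{-1}(⟨ξ⟩^s f̂)‖_{L^q}`. -/
def besselNorm {n : ℕ} (s : ℝ) (q : ℝ≥0∞) (f : En n → ℂ) : ℝ≥0∞ :=
  eLpNorm (fun x : En n =>
    (((2 * Real.pi) ^ n)⁻¹ : ℝ) •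
      ∫ ξ : En n, Complex.ofReal (jb ξ s) * ft f ξ *
        Complex.exp (Complex.I * Complex.ofReal ⟪x, ξ⟫)) q volume

section DirD
open Set Filter Topology

variable {E F : Type*} [NormedAddCommGroup E] [NormedSpace ℝ E] [NormedAddCommGroup F] [NormedSpace ℝ F]

/-- Iterated directional derivative along a list of directions. -/
def dirD (L : List E) (f : E → F) : E → F :=
  L.foldr (fun v g x => fderiv ℝ g x v) f

@[simp] theorem dirD_nil (f : E → F) : dirD [] f = f := rfl

theorem dirD_cons (v : E) (L : List E) (f : E → F) :
    dirD (v :: L) f = fun x => fderiv ℝ (dirD L f) x v := rfl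

theorem dirD_append (L M : List E) (f : E → F) : dirD (L ++ M) f = dirD L (dirD M f) := by
  simp [dirD, List.foldr_append]

theorem contDiff_D (v : E) (f : E → F) (hf : ContDiff ℝ (⊤ : ℕ∞) f) :
    ContDiff ℝ (⊤ : ℕ∞) (fun x => fderiv ℝ f x v) := by
  have := (hf.fderiv_right (m := ((⊤ : ℕ∞) : WithTop ℕ∞)) (by simp))
  exact this.clm_apply contDiff_const

theorem contDiff_dirD (L : List E) (f : E → F) (hf : ContDiff ℝ (⊤ : ℕ∞) f) :
    ContDiff ℝ (⊤ : ℕ∞) (dirD L f) := by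
  induction L with
  | nil => exact hf
  | cons v L ih => exact contDiff_D v _ ih

theorem diff_of_smooth {f : E → F} (hf : ContDiff ℝ (⊤ : ℕ∞) f) : Differentiable ℝ f :=
  hf.differentiable (by simp)

theorem D_swap (v w : E) (f : E → F) (hf : ContDiff ℝ (⊤ : ℕ∞) f) :
    (fun x => fderiv ℝ (fun y => fderiv ℝ f y w) x v) =
      fun x => fderiv ℝ (fun y => fderiv ℝ f y v) x w := by
  funext x
  have h1 : ContDiff ℝ (⊤ : ℕ∞) (fderiv ℝ f) := hf.fderiv_right (by simp)
  have h2 := (diff_of_smooth h1) x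
  rw [fderiv_clm_apply h2 (by fun_prop), fderiv_clm_apply h2 (by fun_prop)]
  have hs := (hf.contDiffAt (x := x)).isSymmSndFDerivAt (by
    simp only [minSmoothness_of_isRCLikeNormedField]
    exact WithTop.coe_le_coe.2 (le_top : (2 : ℕ∞) ≤ ⊤))
  simp
  exact hs.eq v w

theorem dirD_perm {L M : List E} (h : L.Perm M) (f : E → F) (hf : ContDiff ℝ (⊤ : ℕ∞) f) :
    dirD L f = dirD M f := by
  induction h with
  | nil => rfl
  | cons x _ ih => rw [dirD_cons, dirD_cons, ih]
  | swap x y l =>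
    simp only [dirD_cons]
    exact D_swap y x _ (contDiff_dirD l f hf)
  | trans _ _ ih1 ih2 => rw [ih1, ih2]

theorem dirD_replicate (k : ℕ) (v : E) (f : E → F) :
    dirD (List.replicate k v) f = (fun g : E → F => fun x => fderiv ℝ g x v)^[k] f := by
  induction k with
  | zero => rfl
  | succ k ih => rw [List.replicate_succ, dirD_cons, ih, Function.iterate_succ_apply']

theorem dirD_flatMap {ι : Type*} (l : List ι) (M : ι → List E) (f : E → F) :
    dirD (l.flatMap M) f = l.foldr (fun i g => dirD (M i) g) f := by
  induction l with
  | nil => rfl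
  | cons i l ih => rw [List.flatMap_cons, dirD_append, ih, List.foldr_cons]

/-- Coordinate directions in `ℝⁿ`. -/
def eb {n : ℕ} (i : Fin n) : En n := EuclideanSpace.single i 1

/-- Coordinate directions in `(ℝⁿ)^N`. -/
def ev {N n : ℕ} (c : Fin N × Fin n) : Fin N → En n := Pi.single c.1 (eb c.2)

/-- Sorted list of coordinates associated with multiplicities. -/
def lst {n : ℕ} (α : Fin n → ℕ) : List (Fin n) :=
  (List.finRange n).flatMap fun i => List.replicate (α i) i

theorem mderiv_eq {n : ℕ} {F : Type} [NormedAddCommGroup F] [NormedSpace ℝ F]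
    (α : Fin n → ℕ) (f : En n → F) : mderiv α f = dirD ((lst α).map eb) f := by
  rw [lst, List.map_flatMap, dirD_flatMap, mderiv]
  simp only [List.map_replicate, dirD_replicate]
  rfl

theorem mderivN_eq {N n : ℕ} (A : Fin N → Fin n → ℕ) (g : (Fin N → En n) → ℂ) :
    mderivN A g = dirD ((List.finRange N).flatMap fun j => (lst (A j)).map fun i => ev (j, i)) g := by
  rw [dirD_flatMap, mderivN]
  congr 1
  funext j h
  rw [lst, List.map_flatMap, dirD_flatMap]
  simp only [List.map_replicate, dirD_replicate]
  rfl

theorem count_lst {n : ℕ} (α : Fin n → ℕ) (i : Fin n) : (lst α).count i = α i := by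
  rw [lst, List.count_flatMap]
  have : (List.count i ∘ fun i => List.replicate (α i) i) = fun k => if k = i then α i else 0 := by
    funext k
    simp only [Function.comp, List.count_replicate, beq_iff_eq]
    split_ifs with h
    · rw [h]
    · rfl
  rw [this, ← List.ofFn_eq_map, List.sum_ofFn]
  simp

theorem length_lst {n : ℕ} (α : Fin n → ℕ) : (lst α).length = mdeg α := by
  rw [lst, List.length_flatMap, mdeg]
  simp only [List.length_replicate]
  rw [← List.ofFn_eq_map, List.sum_ofFn]

theorem perm_sorted {N n : ℕ} (l : List (Fin N × Fin n)) :
    l.Perm ((List.finRange N).flatMap fun j => (lst (fun i => l.count (j, i))).map fun i => (j, i)) := by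
  rw [List.perm_iff_count]
  rintro ⟨j, i⟩
  rw [List.count_flatMap]
  have : (List.count (j, i) ∘ fun j => (lst (fun i => l.count (j, i))).map fun i => (j, i)) =
      fun k => if k = j then l.count (j, i) else 0 := by
    funext k
    simp only [Function.comp]
    split_ifs with h
    · subst h
      rw [List.count_map_of_injective _ (fun i => (k, i)) (fun a b h => (Prod.mk.inj h).2), count_lst]
    · rw [List.count_eq_zero]
      intro hm
      obtain ⟨a, _, ha⟩ := List.mem_map.1 hm
      exact h (Prod.mk.inj ha).1
  rw [this, ← List.ofFn_eq_map, List.sum_ofFn]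
  simp

theorem dirD_ev_eq_mderivN {N n : ℕ} (l : List (Fin N × Fin n)) (g : (Fin N → En n) → ℂ)
    (hg : ContDiff ℝ (⊤ : ℕ∞) g) :
    dirD (l.map ev) g = mderivN (fun j i => l.count (j, i)) g := by
  rw [mderivN_eq, dirD_perm ((perm_sorted l).map ev) g hg, List.map_flatMap]
  simp only [List.map_map]
  rfl

theorem sum_count {N n : ℕ} (l : List (Fin N × Fin n)) :
    ∑ j, mdeg (fun i => l.count (j, i)) = l.length := by
  rw [(perm_sorted l).length_eq, List.length_flatMap]
  simp only [List.length_map, length_lst]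
  rw [← List.ofFn_eq_map, List.sum_ofFn]

theorem dirD_single {N n : ℕ} (j : Fin N) (L : List (En n)) (Ψ : (Fin N → En n) → F)
    (hΨ : ContDiff ℝ (⊤ : ℕ∞) Ψ) (U : Fin N → En n) :
    dirD (L.map (Pi.single j)) Ψ U = dirD L (fun y => Ψ (Function.update U j y)) (U j) := by
  induction L generalizing U with
  | nil => simp
  | cons v L ih =>
    rw [List.map_cons, dirD_cons, dirD_cons]
    have h1 : (fun y => dirD (L.map (Pi.single j)) Ψ (Function.update U j y)) =
        dirD L (fun y => Ψ (Function.update U j y)) := by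
      funext y
      rw [ih]
      simp
    rw [← h1]
    have h2 := (diff_of_smooth (contDiff_dirD (L.map (Pi.single j)) Ψ hΨ) (Function.update U j (U j))).hasFDerivAt
    have h3 := h2.comp (U j) (hasFDerivAt_update U (U j))
    have h4 := h3.fderiv
    simp only [Function.comp_def] at h4
    change fderiv ℝ (dirD (L.map (Pi.single j)) Ψ) U (Pi.single j v) = fderiv ℝ (fun y => dirD (L.map (Pi.single j)) Ψ (Function.update U j y)) (U j) v
    rw [h4]
    simp only [Function.update_eq_self, ContinuousLinearMap.comp_apply]
    congr 1
    ext k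
    by_cases hk : k = j
    · subst hk; simp
    · simp [hk]

theorem mixedD_eq {n : ℕ} (φ : En n → En n → ℝ)
    (hφ : ContDiff ℝ (⊤ : ℕ∞) (fun U : Fin 2 → En n => φ (U 0) (U 1)))
    (l : List (Fin 2 × Fin n)) (U : Fin 2 → En n) :
    dirD (l.map ev) (fun U : Fin 2 → En n => φ (U 0) (U 1)) U =
      mixedD (fun i => l.count (1, i)) (fun i => l.count (0, i)) φ (U 0) (U 1) := by
  rw [dirD_perm ((perm_sorted l).map ev) _ hφ]
  have e : List.finRange 2 = [0, 1] := by decide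
  rw [e]
  simp only [List.flatMap_cons, List.flatMap_nil, List.append_nil]
  rw [dirD_perm (List.perm_append_comm.map ev) _ hφ, List.map_append, dirD_append]
  have hm : ∀ (j : Fin 2) (M : List (Fin n)), (M.map fun i => (j, i)).map ev =
      (M.map eb).map (Pi.single (M := fun _ : Fin 2 => En n) j) := by
    intro j M
    simp only [List.map_map]
    rfl
  rw [hm, hm, dirD_single _ _ _ (contDiff_dirD _ _ hφ), mixedD, mderiv_eq]
  congr 1
  funext ζ
  rw [dirD_single _ _ _ hφ, mderiv_eq]
  simp

end DirD

section FTC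
open Set Filter Topology

theorem integral_cons {E : Type*} [NormedAddCommGroup E] [NormedSpace ℝ E] {d : ℕ} (F : (Fin (d+1) → ℝ) → E)
    (hF : Integrable F) :
    ∫ y, F y = ∫ s : ℝ, ∫ y' : Fin d → ℝ, F (Fin.cons s y') := by
  have hp := (volume_preserving_piFinSuccAbove (fun _ : Fin (d+1) => ℝ) 0).symm
  rw [← hp.integral_comp (MeasurableEquiv.measurableEmbedding _)]
  have hi : Integrable (fun p : ℝ × (Fin d → ℝ) => F (Fin.cons p.1 p.2)) := by
    have := (hp.integrable_comp_emb (MeasurableEquiv.measurableEmbedding _) (g := F)).2 hF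
    refine this.congr (Eventually.of_forall fun p => ?_)
    simp [MeasurableEquiv.piFinSuccAbove, Fin.insertNthEquiv]
  have := integral_prod _ hi
  rw [← this]
  refine integral_congr_ae (Eventually.of_forall fun p => ?_)
  simp [MeasurableEquiv.piFinSuccAbove, Fin.insertNthEquiv]

theorem lintegral_fin_prod {X : Type*} [MeasureSpace X] [SigmaFinite (volume : Measure X)] (N : ℕ) :
    ∀ (f : Fin N → X → ℝ≥0∞) (_ : ∀ j, Measurable (f j)),
    ∫⁻ U : Fin N → X, ∏ j, f j (U j) = ∏ j, ∫⁻ u, f j u := by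
  induction N with
  | zero =>
    intro f hf
    rw [Measure.volume_pi_eq_dirac]
    simp
  | succ N ih =>
    intro f hf
    have hp := (volume_preserving_piFinSuccAbove (fun _ : Fin (N+1) => X) 0).symm
    rw [← hp.lintegral_comp_emb (MeasurableEquiv.measurableEmbedding _)]
    have : ∀ p : X × (Fin N → X), ∏ j, f j ((MeasurableEquiv.piFinSuccAbove (fun _ : Fin (N+1) => X) 0).symm p j)
        = f 0 p.1 * ∏ j : Fin N, f j.succ (p.2 j) := by
      intro p
      rw [Fin.prod_univ_succ]
      simp [MeasurableEquiv.piFinSuccAbove, Fin.insertNthEquiv]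
    simp only [this]
    have h2 : Measurable fun y : Fin N → X => ∏ j : Fin N, f j.succ (y j) :=
      Finset.measurable_prod _ fun j _ => (hf _).comp (measurable_pi_apply j)
    have h3 := lintegral_prod_mul (μ := (volume : Measure X)) (ν := (volume : Measure (Fin N → X)))
      (hf 0).aemeasurable h2.aemeasurable
    rw [Fin.prod_univ_succ, ← ih _ (fun j => hf j.succ), ← h3]
    rfl

theorem one_add_integrable {r : ℝ} (hr : r < -1) : Integrable (fun x : ℝ => (1 + |x|) ^ r) := by
  have := integrable_one_add_norm (E := ℝ) (μ := volume) (r := -r) (by simp; linarith)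
  simpa using this

theorem rpow_decay_prod {ι : Type*} [Fintype ι] (m : ℝ) (hm : m < 0) (S : ℝ) (y : ι → ℝ)
    (hS : ∀ i, |y i| ≤ S) (hS0 : 0 ≤ S) (K : ℕ) (hK : Fintype.card ι = K) :
    (1 + S) ^ (m - K) ≤ ∏ i, (1 + |y i|) ^ (-1 + m / (K + 1) : ℝ) := by
  have h1 : (1 + S) ^ (m - K) ≤ ((1 + S) ^ (-1 + m / (K + 1) : ℝ)) ^ K := by
    rw [← Real.rpow_natCast, ← Real.rpow_mul (by linarith)]
    apply Real.rpow_le_rpow_of_exponent_le (by linarith)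
    have : m ≤ m / (K+1) * K := by
      rw [div_mul_eq_mul_div, le_div_iff₀ (by positivity)]
      nlinarith
    linarith
  refine h1.trans ?_
  rw [← hK, ← Finset.card_univ, ← Finset.prod_const]
  refine Finset.prod_le_prod (fun i _ => by positivity) fun i _ => ?_
  apply Real.rpow_le_rpow_of_nonpos (by positivity) (by linarith [hS i])
  have : m / ((K:ℝ)+1) < 0 := div_neg_of_neg_of_pos hm (by positivity)
  rw [Finset.card_univ, hK]
  linarith

theorem integrable_prod_weight (d : ℕ) (r : ℝ) (hr : r < -1) :
    Integrable (fun y : Fin d → ℝ => ∏ i, (1 + |y i|) ^ r) := by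
  exact Integrable.fintype_prod (μ := fun _ => volume) fun i => one_add_integrable hr

theorem integrable_of_decay (d : ℕ) (m : ℝ) (hm : m < 0) (B : ℝ) (f : (Fin d → ℝ) → ℂ) (hc : Continuous f)
    (hb : ∀ x, ‖f x‖ ≤ B * (1 + ‖x‖) ^ (m - d)) : Integrable f := by
  have hB : 0 ≤ B := by
    have := (norm_nonneg _).trans (hb 0)
    simpa using this
  have hd : m / ((d:ℝ)+1) < 0 := div_neg_of_neg_of_pos hm (by positivity)
  refine Integrable.mono' ((integrable_prod_weight d (-1 + m / (d+1)) (by linarith)).const_mul B)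
    hc.aestronglyMeasurable (Eventually.of_forall fun x => (hb x).trans ?_)
  refine mul_le_mul_of_nonneg_left ?_ hB
  exact rpow_decay_prod m hm ‖x‖ x (fun i => norm_le_pi_norm x i) (norm_nonneg _) d (by simp)

theorem ftc_pi (d : ℕ) : ∀ (m : ℝ) (_ : m < 0) (B : ℝ) (D : ℕ → (Fin d → ℝ) → ℂ)
    (_ : ∀ (k : Fin d) (x : Fin d → ℝ), HasDerivAt (fun t => D k (Function.update x k t)) (D (k+1) x) (x k))
    (_ : ∀ k, Continuous (D k))
    (_ : ∀ k ≤ d, ∀ x, ‖D k x‖ ≤ B * (1 + ‖x‖) ^ (m - k)) (x : Fin d → ℝ),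
    D 0 x = (-1) ^ d * ∫ y : Fin d → ℝ, if ∀ i, x i ≤ y i then D d y else 0 := by
  induction d with
  | zero =>
    intro m hm B D hd hc hb x
    rw [Measure.volume_pi_eq_dirac, integral_dirac]
    simp
    congr 1
    exact Subsingleton.elim _ _
  | succ d ih =>
    intro m hm B D hd hc hb x
    have hB : 0 ≤ B := by
      have := (norm_nonneg _).trans (hb 0 (by simp) 0)
      simpa using this
    obtain ⟨t, x', rfl⟩ : ∃ t x', x = Fin.cons t x' := ⟨x 0, Fin.tail x, (Fin.cons_self_tail x).symm⟩
    have hns : ∀ (s : ℝ) (z : Fin d → ℝ), |s| ≤ ‖(Fin.cons s z : Fin (d+1) → ℝ)‖ := by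
      intro s z
      simpa using norm_le_pi_norm (Fin.cons s z : Fin (d+1) → ℝ) 0
    have hnz : ∀ (s : ℝ) (z : Fin d → ℝ), ‖z‖ ≤ ‖(Fin.cons s z : Fin (d+1) → ℝ)‖ := by
      intro s z
      refine (pi_norm_le_iff_of_nonneg (norm_nonneg _)).2 fun i => ?_
      simpa using norm_le_pi_norm (Fin.cons s z : Fin (d+1) → ℝ) i.succ
    -- inner
    have hin : ∀ s z, D 1 (Fin.cons s z) = (-1) ^ d * ∫ y : Fin d → ℝ, if ∀ i, z i ≤ y i then D (d+1) (Fin.cons s y) else 0 := by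
      intro s z
      refine ih (m - 1) (by linarith) B (fun k z => D (k+1) (Fin.cons s z)) ?_ ?_ ?_ z
      · intro k z
        have := hd k.succ (Fin.cons s z)
        simp only [Fin.cons_succ] at this
        convert this using 2 with t
        · rw [Fin.cons_update]
          rfl
        · rfl
      · intro k
        exact (hc _).comp (by fun_prop)
      · intro k hk z
        refine (hb (k+1) (by omega) _).trans ?_
        refine mul_le_mul_of_nonneg_left ?_ hB
        have : m - ((k+1 : ℕ):ℝ) = m - 1 - k := by push_cast; ring
        rw [this]
        apply Real.rpow_le_rpow_of_nonpos (by positivity) (by linarith [hnz s z])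
        have : (0:ℝ) ≤ k := by positivity
        linarith
    have hout : ∫ s in Ioi t, D 1 (Fin.cons s x') = 0 - D 0 (Fin.cons t x') := by
      refine integral_Ioi_of_hasDerivAt_of_tendsto' (f := fun s => D 0 (Fin.cons s x')) ?_ ?_ ?_
      · intro s _
        have := hd 0 (Fin.cons s x')
        simpa using this
      · apply Integrable.integrableOn
        refine Integrable.mono' ((one_add_integrable (r := m - 1) (by linarith)).const_mul B) 
          ((hc 1).comp (by fun_prop)).aestronglyMeasurable (Eventually.of_forall fun s => (hb 1 (by omega) _).trans ?_)
        refine mul_le_mul_of_nonneg_left ?_ hB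
        simp only [Nat.cast_one]
        apply Real.rpow_le_rpow_of_nonpos (by positivity) (by linarith [hns s x'])
        linarith
      · refine squeeze_zero_norm (a := fun s => B * (1 + |s|) ^ m) (fun s => ?_) ?_
        · refine (hb 0 (by omega) _).trans ?_
          refine mul_le_mul_of_nonneg_left ?_ hB
          simp only [Nat.cast_zero, sub_zero]
          exact Real.rpow_le_rpow_of_nonpos (by positivity) (by linarith [hns s x']) hm.le
        · have h1 : Tendsto (fun s : ℝ => 1 + |s|) atTop atTop :=
            tendsto_atTop_add_const_left _ _ tendsto_abs_atTop_atTop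
          have h2 := (tendsto_rpow_neg_atTop (y := -m) (by linarith)).comp h1
          simpa [Function.comp_def] using h2.const_mul B
    have hmeas : MeasurableSet {y : Fin (d+1) → ℝ | ∀ i, (Fin.cons t x' : Fin (d+1) → ℝ) i ≤ y i} := by
      have : {y : Fin (d+1) → ℝ | ∀ i, (Fin.cons t x' : Fin (d+1) → ℝ) i ≤ y i} = Ici (Fin.cons t x' : Fin (d+1) → ℝ) := by
        ext y; simp [Pi.le_def]
      rw [this]
      exact measurableSet_Ici
    have hintg : Integrable (D (d+1)) := integrable_of_decay (d+1) m hm B _ (hc _) (hb (d+1) le_rfl)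
    have hF : Integrable (fun y : Fin (d+1) → ℝ => if ∀ i, (Fin.cons t x' : Fin (d+1) → ℝ) i ≤ y i then D (d+1) y else 0) := by
      refine (hintg.indicator hmeas).congr (Eventually.of_forall fun y => ?_)
      simp [Set.indicator_apply]
    rw [integral_cons _ hF]
    have e1 : ∀ s : ℝ, (∫ y' : Fin d → ℝ, if ∀ i, (Fin.cons t x' : Fin (d+1) → ℝ) i ≤ (Fin.cons s y' : Fin (d+1) → ℝ) i
        then D (d+1) (Fin.cons s y') else 0) = (Ici t).indicator (fun s => (-1) ^ d * D 1 (Fin.cons s x')) s := by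
      intro s
      simp only [Fin.forall_fin_succ, Fin.cons_zero, Fin.cons_succ]
      by_cases hs : t ≤ s
      · rw [indicator_of_mem (show s ∈ Ici t from hs), hin s x', ← mul_assoc, ← mul_pow]
        simp [hs]
      · rw [indicator_of_notMem (show s ∉ Ici t from hs)]
        simp [hs]
    simp only [e1]
    rw [integral_indicator measurableSet_Ici, integral_Ici_eq_integral_Ioi, integral_const_mul, hout, pow_succ]
    have : ((-1 : ℂ) ^ d) * (-1) ^ d = 1 := by rw [← mul_pow]; simp
    linear_combination (-D 0 (Fin.cons t x')) * this

end FTC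

section Sep
open Set Filter Topology

/-- Lower orthant. -/
def low {n : ℕ} (u : En n) : Set (En n) := {ξ | ∀ i, ξ i ≤ u i}

/-- Product weight. -/
def nu {n : ℕ} (r : ℝ) (u : En n) : ℝ≥0∞ := ∏ i, ENNReal.ofReal ((1 + |u i|) ^ r)

/-- Enumeration of all coordinates, as growing lists. -/
def lc (N n : ℕ) : ℕ → List (Fin N × Fin n)
  | 0 => []
  | k + 1 => if h : k < N * n then finProdFinEquiv.symm ⟨k, h⟩ :: lc N n k else lc N n k

theorem lc_length (N n k : ℕ) (hk : k ≤ N * n) : (lc N n k).length = k := by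
  induction k with
  | zero => rfl
  | succ k ih =>
    rw [lc, dif_pos (by omega), List.length_cons, ih (by omega)]

/-- Regrouping coordinates. -/
def TT (N n : ℕ) : (Fin N → En n) ≃ᵐ (Fin (N * n) → ℝ) where
  toFun U k := U (finProdFinEquiv.symm k).1 (finProdFinEquiv.symm k).2
  invFun x j := WithLp.toLp 2 fun i => x (finProdFinEquiv (j, i))
  left_inv U := by
    funext j
    ext i
    simp
  right_inv x := by
    funext k
    simp only
    congr 1
    exact finProdFinEquiv.apply_symm_apply k
  measurable_toFun := by
    refine measurable_pi_lambda _ fun k => ?_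
    simp only [Equiv.coe_fn_mk]
    exact Continuous.measurable (by fun_prop)
  measurable_invFun := by
    refine measurable_pi_lambda _ fun k => ?_
    simp only [Equiv.coe_fn_symm_mk]
    exact Continuous.measurable (by fun_prop)

theorem TT_apply (N n : ℕ) (U : Fin N → En n) (k) : TT N n U k = U (finProdFinEquiv.symm k).1 (finProdFinEquiv.symm k).2 := rfl
theorem TT_symm_apply (N n : ℕ) (x) (j) (i) : (TT N n).symm x j i = x (finProdFinEquiv (j, i)) := rfl

theorem TT_mp (N n : ℕ) : MeasurePreserving (TT N n) volume volume := by
  refine ⟨(TT N n).measurable, ?_⟩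
  symm
  refine Measure.pi_eq fun s hs => ?_
  rw [Measure.map_apply (TT N n).measurable (MeasurableSet.univ_pi hs)]
  have : (TT N n) ⁻¹' (univ.pi s) = univ.pi fun j => (@WithLp.ofLp 2 (Fin n → ℝ)) ⁻¹' (univ.pi fun i => s (finProdFinEquiv (j, i))) := by
    ext U
    simp only [mem_preimage, mem_univ_pi, TT_apply]
    constructor
    · intro h j i
      simpa using h (finProdFinEquiv (j, i))
    · intro h k
      have h1 : U (finProdFinEquiv.symm k).1 (finProdFinEquiv.symm k).2 ∈
          s (finProdFinEquiv ((finProdFinEquiv.symm k).1, (finProdFinEquiv.symm k).2)) :=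
        h (finProdFinEquiv.symm k).1 (finProdFinEquiv.symm k).2
      rwa [Prod.mk.eta, Equiv.apply_symm_apply] at h1
  rw [this, volume_pi_pi]
  simp only [(PiLp.volume_preserving_ofLp (Fin n)).measure_preimage (MeasurableSet.univ_pi fun i => hs _).nullMeasurableSet,
    volume_pi_pi]
  rw [← Fintype.prod_prod_type', ← finProdFinEquiv.prod_comp]

theorem TT_symm_continuous (N n : ℕ) : Continuous (TT N n).symm := by
  refine continuous_pi fun j => ?_
  change Continuous fun x : Fin (N * n) → ℝ => (WithLp.toLp 2 fun i => x (finProdFinEquiv (j, i)) : En n)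
  fun_prop

theorem TT_symm_update (N n : ℕ) (x : Fin (N * n) → ℝ) (k : Fin (N * n)) (t : ℝ) :
    (TT N n).symm (Function.update x k t) = (TT N n).symm x + (t - x k) • ev (finProdFinEquiv.symm k) := by
  obtain ⟨⟨j0, i0⟩, rfl⟩ := finProdFinEquiv.surjective k
  rw [Equiv.symm_apply_apply]
  funext j
  ext i
  rw [TT_symm_apply, Function.update_apply]
  simp only [Pi.add_apply, Pi.smul_apply, PiLp.add_apply, PiLp.smul_apply, TT_symm_apply, ev, eb, smul_eq_mul,
    EmbeddingLike.apply_eq_iff_eq, Prod.mk.injEq]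
  by_cases hj : j = j0
  · subst hj
    by_cases hi : i = i0
    · subst hi; simp
    · simp [hi]
  · simp [hj]

theorem chain_hasDeriv {N n : ℕ} (b : (Fin N → En n) → ℂ) (hb : ContDiff ℝ (⊤ : ℕ∞) b) (k : Fin (N * n)) (x) :
    HasDerivAt (fun t => dirD ((lc N n k).map ev) b ((TT N n).symm (Function.update x k t)))
      (dirD ((lc N n (k+1)).map ev) b ((TT N n).symm x)) (x k) := by
  simp only [TT_symm_update]
  rw [lc, dif_pos k.2, List.map_cons, dirD_cons]
  have h1 := (diff_of_smooth (contDiff_dirD ((lc N n k).map ev) b hb) ((TT N n).symm x)).hasFDerivAt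
  have h2 : HasDerivAt (fun t : ℝ => (TT N n).symm x + (t - x k) • (ev (finProdFinEquiv.symm k) : Fin N → En n))
      (ev (finProdFinEquiv.symm k)) (x k) := by
    have := (((hasDerivAt_id (x k)).sub_const (x k)).smul_const (ev (finProdFinEquiv.symm k) : Fin N → En n)).const_add ((TT N n).symm x)
    simpa using this
  have h3 : HasFDerivAt (dirD ((lc N n k).map ev) b) (fderiv ℝ (dirD ((lc N n k).map ev) b) ((TT N n).symm x))
      ((TT N n).symm x + (x k - x k) • (ev (finProdFinEquiv.symm k) : Fin N → En n)) := by
    simpa using h1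
  exact h3.comp_hasDerivAt _ h2

theorem TT_symm_norm (N n : ℕ) (x : Fin (N * n) → ℝ) : ‖x‖ ≤ ∑ j, ‖(TT N n).symm x j‖ := by
  refine (pi_norm_le_iff_of_nonneg (by positivity)).2 fun k => ?_
  obtain ⟨⟨j, i⟩, rfl⟩ := finProdFinEquiv.surjective k
  rw [← TT_symm_apply N n x j i]
  refine (PiLp.norm_apply_le _ i).trans ?_
  exact Finset.single_le_sum (f := fun j => ‖(TT N n).symm x j‖) (fun _ _ => norm_nonneg _) (Finset.mem_univ j)

theorem low_measurable {n : ℕ} (u : En n) : MeasurableSet (low u) := by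
  have : low u = ⋂ i, {ξ : En n | ξ i ≤ u i} := by ext; simp [low]
  rw [this]
  exact (isClosed_iInter fun i => isClosed_le (by fun_prop) (by fun_prop)).measurableSet

theorem low_measurable2 {n : ℕ} : MeasurableSet {p : En n × En n | p.2 ∈ low p.1} := by
  have : {p : En n × En n | p.2 ∈ low p.1} = ⋂ i, {p : En n × En n | p.2 i ≤ p.1 i} := by ext; simp [low]
  rw [this]
  exact (isClosed_iInter fun i => isClosed_le (by fun_prop) (by fun_prop)).measurableSet

theorem lowN_measurable {N n : ℕ} : MeasurableSet {p : (Fin N → En n) × (Fin N → En n) | ∀ j, p.2 j ∈ low (p.1 j)} := by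
  have : {p : (Fin N → En n) × (Fin N → En n) | ∀ j, p.2 j ∈ low (p.1 j)} =
    ⋂ j, ⋂ i, {p : (Fin N → En n) × (Fin N → En n) | p.2 j i ≤ p.1 j i} := by ext; simp [low]
  rw [this]
  exact (isClosed_iInter fun j => isClosed_iInter fun i => isClosed_le (by fun_prop) (by fun_prop)).measurableSet

theorem nu_measurable {n : ℕ} (r : ℝ) : Measurable (nu (n := n) r) := by
  unfold nu
  fun_prop

theorem sepH_measurable {n : ℕ} (g : En n → ℂ) (hg : Integrable g) :
    Measurable fun u : En n => ‖∫ ξ, (low u).indicator g ξ‖ₑ := by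
  have hm := hg.1
  have : ∀ u : En n, ∫ ξ, (low u).indicator g ξ = ∫ ξ, (low u).indicator (hm.mk g) ξ := by
    intro u
    refine integral_congr_ae ?_
    filter_upwards [hm.ae_eq_mk] with ξ hξ
    simp only [indicator, hξ]
  simp only [this]
  have h2 : StronglyMeasurable fun p : En n × En n => (low p.1).indicator (hm.mk g) p.2 := by
    have := (hm.stronglyMeasurable_mk.comp_measurable (measurable_snd (α := En n))).indicator (low_measurable2 (n := n))
    exact this
  exact (h2.integral_prod_right' (ν := volume)).measurable.enorm

theorem sep {N n : ℕ} (m : ℝ) (hm : m < 0) (b : (Fin N → En n) → ℂ) (hb : ContDiff ℝ (⊤ : ℕ∞) b) (B : ℝ)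
    (hB : ∀ k ≤ N * n, ∀ U, ‖dirD ((lc N n k).map ev) b U‖ ≤ B * (1 + ∑ j, ‖U j‖) ^ (m - k))
    (g : Fin N → En n → ℂ) (hg : ∀ j, Integrable (g j)) :
    ‖∫ U, b U * ∏ j, g j (U j)‖ₑ ≤ ENNReal.ofReal B *
      ∏ j, ∫⁻ u, nu (-1 + m / ((N * n : ℕ) + 1)) u * ‖∫ ξ, (low u).indicator (g j) ξ‖ₑ := by
  have hB0 : 0 ≤ B := by
    have := (norm_nonneg _).trans (hB 0 (by simp) 0)
    simpa using this
  set r : ℝ := -1 + m / ((N * n : ℕ) + 1) with hr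
  set L := dirD ((lc N n (N * n)).map ev) b with hL
  have hLc : Continuous L := (contDiff_dirD _ _ hb).continuous
  have hbd : ∀ k ≤ N * n, ∀ x, ‖dirD ((lc N n k).map ev) b ((TT N n).symm x)‖ ≤ B * (1 + ‖x‖) ^ (m - k) := by
    intro k hk x
    refine (hB k hk _).trans ?_
    refine mul_le_mul_of_nonneg_left ?_ hB0
    apply Real.rpow_le_rpow_of_nonpos (by positivity) (by linarith [TT_symm_norm N n x])
    have : (0:ℝ) ≤ k := by positivity
    linarith
  -- integrability
  have hLi : Integrable L := by
    have := integrable_of_decay (N * n) m hm B (fun x => L ((TT N n).symm x)) (hLc.comp (TT_symm_continuous N n)) (hbd _ le_rfl)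
    exact ((TT_mp N n).symm.integrable_comp_emb (TT N n).symm.measurableEmbedding).1 this
  have hrep : ∀ U, b U = (-1) ^ (N * n) * ∫ W, if ∀ j, U j ∈ low (W j) then L W else 0 := by
    intro U
    have h1 := ftc_pi (N * n) m hm B (fun k x => dirD ((lc N n k).map ev) b ((TT N n).symm x))
      (fun k x => chain_hasDeriv b hb k x) (fun k => (contDiff_dirD _ _ hb).continuous.comp (TT_symm_continuous N n))
      hbd (TT N n U)
    simp only [lc, List.map_nil, dirD_nil, MeasurableEquiv.symm_apply_apply] at h1
    rw [h1, ← (TT_mp N n).integral_comp (TT N n).measurableEmbedding]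
    congr 2
    funext W
    rw [MeasurableEquiv.symm_apply_apply]
    have : (∀ i, (TT N n) U i ≤ (TT N n) W i) ↔ ∀ j, U j ∈ low (W j) := by
      simp only [TT_apply, low, mem_ofPred_eq]
      constructor
      · intro h j i
        simpa using h (finProdFinEquiv (j, i))
      · intro h k
        exact h _ _
    simp only [this]
    rfl
  set G : (Fin N → En n) → ℂ := fun U => ∏ j, g j (U j) with hG
  have hGi : Integrable G := Integrable.fintype_prod (μ := fun _ => volume) hg
  have hFub : Integrable (fun p : (Fin N → En n) × (Fin N → En n) =>
      (if ∀ j, p.2 j ∈ low (p.1 j) then L p.1 * G p.2 else 0)) := by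
    have := (hLi.mul_prod hGi).indicator (lowN_measurable (N := N) (n := n))
    refine this.congr (Eventually.of_forall fun p => ?_)
    simp only [indicator, mem_ofPred_eq]
  have e1 : ∫ U, b U * G U = (-1) ^ (N * n) * ∫ W, L W * ∏ j, ∫ ξ, (low (W j)).indicator (g j) ξ := by
    calc ∫ U, b U * G U = ∫ U, (-1) ^ (N * n) * ∫ W, (if ∀ j, U j ∈ low (W j) then L W * G U else 0) := by
          refine integral_congr_ae (Eventually.of_forall fun U => ?_)
          simp only
          rw [hrep U, mul_assoc, ← integral_mul_const]
          simp only [ite_mul, zero_mul]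
      _ = (-1) ^ (N * n) * ∫ W, ∫ U, (if ∀ j, U j ∈ low (W j) then L W * G U else 0) := by
          rw [integral_const_mul, integral_integral_swap]
          exact hFub.swap
      _ = _ := by
          congr 2
          funext W
          rw [← integral_fintype_prod_volume_eq_prod (fun j ξ => (low (W j)).indicator (g j) ξ), ← integral_const_mul]
          congr 1
          funext U
          split_ifs with h
          · congr 1
            refine Finset.prod_congr rfl fun j _ => ?_
            rw [indicator_of_mem (h j)]
          · push Not at h
            obtain ⟨j, hj⟩ := h
            rw [Finset.prod_eq_zero (Finset.mem_univ j) (indicator_of_notMem hj _), mul_zero]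
  rw [e1, enorm_mul]
  have : ‖((-1 : ℂ)) ^ (N * n)‖ₑ = 1 := by simp [enorm_pow]
  rw [this, one_mul]
  refine (enorm_integral_le_lintegral_enorm _).trans ?_
  have hmeas : ∀ j, Measurable fun u => nu r u * ‖∫ ξ, (low u).indicator (g j) ξ‖ₑ :=
    fun j => (nu_measurable r).mul (sepH_measurable _ (hg j))
  have hmeas2 : Measurable fun U : Fin N → En n => ∏ j, (nu r (U j) * ‖∫ ξ, (low (U j)).indicator (g j) ξ‖ₑ) :=
    Finset.measurable_prod _ fun j _ => (hmeas j).comp (measurable_pi_apply j)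
  rw [← lintegral_fin_prod N (fun j u => nu r u * ‖∫ ξ, (low u).indicator (g j) ξ‖ₑ) hmeas,
    ← lintegral_const_mul _ hmeas2]
  refine lintegral_mono fun W => ?_
  simp only
  rw [enorm_mul, Finset.prod_mul_distrib, ← mul_assoc]
  have hprod : ∀ f : Fin N → ℂ, ‖∏ j, f j‖ₑ = ∏ j, ‖f j‖ₑ := by
    intro f
    simp only [← ofReal_norm, norm_prod]
    rw [ENNReal.ofReal_prod_of_nonneg fun _ _ => norm_nonneg _]
  rw [hprod]
  refine mul_le_mul_left ?_ _
  have h3 := hB _ le_rfl W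
  have h4 := rpow_decay_prod (ι := Fin N × Fin n) m hm (∑ j, ‖W j‖) (fun c => W c.1 c.2) (fun c => by
    refine (PiLp.norm_apply_le (W c.1) c.2).trans ?_
    exact Finset.single_le_sum (f := fun j => ‖W j‖) (fun _ _ => norm_nonneg _) (Finset.mem_univ c.1))
    (by positivity) (N * n) (by simp)
  have h5 : ‖L W‖ ≤ B * ∏ c : Fin N × Fin n, (1 + |W c.1 c.2|) ^ r :=
    h3.trans (mul_le_mul_of_nonneg_left h4 hB0)
  rw [← ofReal_norm]
  refine (ENNReal.ofReal_le_ofReal h5).trans (le_of_eq ?_)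
  rw [ENNReal.ofReal_mul hB0, Fintype.prod_prod_type, ENNReal.ofReal_prod_of_nonneg (fun _ _ => by positivity)]
  congr 1
  refine Finset.prod_congr rfl fun j _ => ?_
  rw [ENNReal.ofReal_prod_of_nonneg (fun _ _ => by positivity)]
  rfl

theorem lintegral_nu_lt {n : ℕ} (r : ℝ) (hr : r < -1) : ∫⁻ u : En n, nu r u < ⊤ := by
  have h1 : ∫⁻ u : En n, nu r u = ∫⁻ y : Fin n → ℝ, ∏ i, ENNReal.ofReal ((1 + |y i|) ^ r) :=
    ((PiLp.volume_preserving_ofLp (Fin n)).lintegral_comp (f := fun y => ∏ i, ENNReal.ofReal ((1 + |y i|) ^ r)) (by fun_prop))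
  rw [h1, lintegral_fin_prod n (fun _ t => ENNReal.ofReal ((1 + |t|) ^ r)) (fun _ => by fun_prop)]
  refine ENNReal.prod_lt_top fun i _ => ?_
  have := (one_add_integrable hr).lintegral_lt_top
  exact this

end Sep

section UBsec
open Set Filter Topology

variable {N n : ℕ} {Θ : Type*}

/-- Uniform boundedness of derivatives up to order `k` on a set. -/
def UB (S : Set (Fin N → En n)) : ℕ → (Θ → (Fin N → En n) → ℂ) → Prop
  | 0, f => ∃ C : ℝ, ∀ θ, ∀ t ∈ S, ‖f θ t‖ ≤ C
  | k + 1, f => (∃ C : ℝ, ∀ θ, ∀ t ∈ S, ‖f θ t‖ ≤ C) ∧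
      ∀ c : Fin N × Fin n, UB S k (fun θ t => fderiv ℝ (f θ) t (ev c))

theorem UB.bdd {S : Set (Fin N → En n)} {k : ℕ} {f : Θ → (Fin N → En n) → ℂ} (h : UB S k f) :
    ∃ C : ℝ, ∀ θ, ∀ t ∈ S, ‖f θ t‖ ≤ C := by
  cases k with
  | zero => exact h
  | succ k => exact h.1

theorem UB.of_succ {S : Set (Fin N → En n)} {k : ℕ} : ∀ {f : Θ → (Fin N → En n) → ℂ} (_ : UB S (k+1) f), UB S k f := by
  induction k with
  | zero => intro f h; exact h.1
  | succ k ih => intro f h; exact ⟨h.1, fun c => ih (h.2 c)⟩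

theorem UB.dirD_bdd {S : Set (Fin N → En n)} (l : List (Fin N × Fin n)) :
    ∀ {k : ℕ} {f : Θ → (Fin N → En n) → ℂ} (_ : UB S k f) (_ : l.length ≤ k),
    ∃ C : ℝ, ∀ θ, ∀ t ∈ S, ‖dirD (l.map ev) (f θ) t‖ ≤ C := by
  induction l using List.reverseRecOn with
  | nil => intro k f h _; exact h.bdd
  | append_singleton l c ih =>
    intro k f h hk
    simp only [List.length_append, List.length_singleton] at hk
    obtain ⟨k, rfl⟩ : ∃ k', k = k' + 1 := ⟨k - 1, by omega⟩
    have := ih (h.2 c) (by omega)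
    simpa only [List.map_append, dirD_append, List.map_cons, List.map_nil, dirD_cons, dirD_nil] using this

theorem UB.add {S : Set (Fin N → En n)} (k : ℕ) : ∀ {f g : Θ → (Fin N → En n) → ℂ}
    (_ : ∀ θ, ContDiff ℝ (⊤ : ℕ∞) (f θ)) (_ : ∀ θ, ContDiff ℝ (⊤ : ℕ∞) (g θ))
    (_ : UB S k f) (_ : UB S k g), UB S k (fun θ t => f θ t + g θ t) := by
  have key : ∀ {f g : Θ → (Fin N → En n) → ℂ}, (∃ C : ℝ, ∀ θ, ∀ t ∈ S, ‖f θ t‖ ≤ C) → 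
      (∃ C : ℝ, ∀ θ, ∀ t ∈ S, ‖g θ t‖ ≤ C) → ∃ C : ℝ, ∀ θ, ∀ t ∈ S, ‖f θ t + g θ t‖ ≤ C := by
    rintro f g ⟨C, hC⟩ ⟨D, hD⟩
    exact ⟨C + D, fun θ t ht => (norm_add_le _ _).trans (add_le_add (hC θ t ht) (hD θ t ht))⟩
  induction k with
  | zero => intro f g hf hg h1 h2; exact key h1 h2
  | succ k ih =>
    intro f g hf hg h1 h2
    refine ⟨key h1.1 h2.1, fun c => ?_⟩
    have := ih (fun θ => contDiff_D (ev c) _ (hf θ)) (fun θ => contDiff_D (ev c) _ (hg θ)) (h1.2 c) (h2.2 c)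
    convert this using 3 with θ t
    have h := fderiv_add (diff_of_smooth (hf θ) t) (diff_of_smooth (hg θ) t)
    change fderiv ℝ (f θ + g θ) t (ev c) = _
    rw [h]
    rfl

theorem UB.mul {S : Set (Fin N → En n)} (k : ℕ) : ∀ {f g : Θ → (Fin N → En n) → ℂ}
    (_ : ∀ θ, ContDiff ℝ (⊤ : ℕ∞) (f θ)) (_ : ∀ θ, ContDiff ℝ (⊤ : ℕ∞) (g θ))
    (_ : UB S k f) (_ : UB S k g), UB S k (fun θ t => f θ t * g θ t) := by
  have key : ∀ {f g : Θ → (Fin N → En n) → ℂ}, (∃ C : ℝ, ∀ θ, ∀ t ∈ S, ‖f θ t‖ ≤ C) → 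
      (∃ C : ℝ, ∀ θ, ∀ t ∈ S, ‖g θ t‖ ≤ C) → ∃ C : ℝ, ∀ θ, ∀ t ∈ S, ‖f θ t * g θ t‖ ≤ C := by
    rintro f g ⟨C, hC⟩ ⟨D, hD⟩
    refine ⟨C * D, fun θ t ht => ?_⟩
    rw [norm_mul]
    exact mul_le_mul (hC θ t ht) (hD θ t ht) (norm_nonneg _) ((norm_nonneg _).trans (hC θ t ht))
  induction k with
  | zero => intro f g hf hg h1 h2; exact key h1 h2
  | succ k ih =>
    intro f g hf hg h1 h2
    refine ⟨key h1.1 h2.1, fun c => ?_⟩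
    have hf' := fun θ => contDiff_D (ev c) _ (hf θ)
    have hg' := fun θ => contDiff_D (ev c) _ (hg θ)
    have a1 := ih hf hg' h1.of_succ (h2.2 c)
    have a2 := ih hf' hg (h1.2 c) h2.of_succ
    have := UB.add k (fun θ => (hf θ).mul (hg' θ)) (fun θ => (hf' θ).mul (hg θ)) a1 a2
    convert this using 3 with θ t
    have h := fderiv_mul (diff_of_smooth (hf θ) t) (diff_of_smooth (hg θ) t)
    change fderiv ℝ (f θ * g θ) t (ev c) = _
    rw [h]
    simp
    ring

theorem contDiff_cexp {f : (Fin N → En n) → ℝ} (hf : ContDiff ℝ (⊤ : ℕ∞) f) :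
    ContDiff ℝ (⊤ : ℕ∞) fun t => Complex.exp (Complex.I * Complex.ofReal (f t)) := by
  have h1 : ContDiff ℝ (⊤ : ℕ∞) fun t => Complex.ofReal (f t) := Complex.ofRealCLM.contDiff.comp hf
  exact (contDiff_const.mul h1).cexp

theorem UB.const (S : Set (Fin N → En n)) (k : ℕ) (z : ℂ) : UB S k (fun (_ : Θ) _ => z) := by
  induction k generalizing z with
  | zero => exact ⟨‖z‖, fun _ _ _ => le_rfl⟩
  | succ k ih =>
    refine ⟨⟨‖z‖, fun _ _ _ => le_rfl⟩, fun c => ?_⟩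
    simpa using ih 0

theorem UB.cexp {S : Set (Fin N → En n)} {R : Θ → (Fin N → En n) → ℝ}
    (hR : ∀ θ, ContDiff ℝ (⊤ : ℕ∞) (R θ))
    (h : ∀ k c, UB S k (fun θ t => ((fderiv ℝ (R θ) t (ev c) : ℝ) : ℂ))) (k : ℕ) :
    UB S k (fun θ t => Complex.exp (Complex.I * Complex.ofReal (R θ t))) := by
  have key : ∃ C : ℝ, ∀ θ, ∀ t ∈ S, ‖Complex.exp (Complex.I * Complex.ofReal (R θ t))‖ ≤ C := by
    refine ⟨1, fun θ t _ => ?_⟩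
    rw [mul_comm, Complex.norm_exp_ofReal_mul_I]
  induction k with
  | zero => exact key
  | succ k ih =>
    refine ⟨key, fun c => ?_⟩
    have hs : ∀ θ, ContDiff ℝ (⊤ : ℕ∞) fun t => ((fderiv ℝ (R θ) t (ev c) : ℝ) : ℂ) :=
      fun θ => Complex.ofRealCLM.contDiff.comp (contDiff_D (ev c) _ (hR θ))
    have h1 := UB.mul k (fun θ => contDiff_const (c := Complex.I)) hs (UB.const S k Complex.I) (h k c)
    have h2 := UB.mul k (fun θ => contDiff_const.mul (hs θ)) (fun θ => contDiff_cexp (hR θ)) h1 ih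
    convert h2 using 3 with θ t
    have e1 : HasFDerivAt (fun t => Complex.ofReal (R θ t)) (Complex.ofRealCLM.comp (fderiv ℝ (R θ) t)) t :=
      Complex.ofRealCLM.hasFDerivAt.comp t (diff_of_smooth (hR θ) t).hasFDerivAt
    have e2 := (e1.const_mul Complex.I).cexp
    rw [e2.fderiv]
    simp
    ring

theorem UB.shift (S : Set (Fin N → En n)) (k : ℕ) : ∀ (h : (Fin N → En n) → ℝ) (_ : ContDiff ℝ (⊤ : ℕ∞) h)
    (_ : ∀ l : List (Fin N × Fin n), ∃ C, ∀ U, |dirD (l.map ev) h U| ≤ C),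
    UB S k (fun (θ : Fin N → En n) t => ((h (θ + t) : ℝ) : ℂ)) := by
  induction k with
  | zero => 
    intro h hs hb
    obtain ⟨C, hC⟩ := hb []
    exact ⟨C, fun θ t _ => by simpa using hC (θ + t)⟩
  | succ k ih =>
    intro h hs hb
    refine ⟨?_, fun c => ?_⟩
    · obtain ⟨C, hC⟩ := hb []
      exact ⟨C, fun θ t _ => by simpa using hC (θ + t)⟩
    · have := ih (fun U => fderiv ℝ h U (ev c)) (contDiff_D _ _ hs) (fun l => by
        have := hb (l ++ [c])
        simpa only [List.map_append, dirD_append, List.map_cons, List.map_nil, dirD_cons, dirD_nil] using this)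
      convert this using 3 with θ t
      have e0 : HasFDerivAt (fun t => h (θ + t)) (fderiv ℝ h (θ + t)) t := by
        have := (diff_of_smooth hs (θ + t)).hasFDerivAt.comp t ((hasFDerivAt_id t).const_add θ)
        simpa [Function.comp_def] using this
      have e1 : HasFDerivAt (fun t => Complex.ofReal (h (θ + t))) (Complex.ofRealCLM.comp (fderiv ℝ h (θ + t))) t :=
        Complex.ofRealCLM.hasFDerivAt.comp t e0
      rw [e1.fderiv]
      simp

/-- Taylor remainder of order two. -/
def Rem (Φ : (Fin N → En n) → ℝ) (θ t : Fin N → En n) : ℝ := Φ (θ + t) - Φ θ - fderiv ℝ Φ θ t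

theorem Rem_contDiff {Φ : (Fin N → En n) → ℝ} (hΦ : ContDiff ℝ (⊤ : ℕ∞) Φ) (θ) : ContDiff ℝ (⊤ : ℕ∞) (Rem Φ θ) := by
  unfold Rem
  exact ((hΦ.comp (contDiff_const.add contDiff_id)).sub contDiff_const).sub (fderiv ℝ Φ θ).contDiff

theorem Rem_fderiv {Φ : (Fin N → En n) → ℝ} (hΦ : ContDiff ℝ (⊤ : ℕ∞) Φ) (θ t v) :
    fderiv ℝ (Rem Φ θ) t v = fderiv ℝ Φ (θ + t) v - fderiv ℝ Φ θ v := by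
  have e0 : HasFDerivAt (fun t => Φ (θ + t)) (fderiv ℝ Φ (θ + t)) t := by
    have := (diff_of_smooth hΦ (θ + t)).hasFDerivAt.comp t ((hasFDerivAt_id t).const_add θ)
    simpa [Function.comp_def] using this
  have := (e0.sub_const (Φ θ)).sub (fderiv ℝ Φ θ).hasFDerivAt
  rw [show Rem Φ θ = fun t => Φ (θ + t) - Φ θ - fderiv ℝ Φ θ t from rfl]
  erw [this.fderiv]
  rfl

theorem ev_basis (t : Fin N → En n) : t = ∑ c : Fin N × Fin n, t c.1 c.2 • ev c := by
  funext j
  ext i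
  rw [Fintype.sum_prod_type]
  simp [ev, eb, Finset.sum_apply, Pi.single_apply]

/-- A function whose directional coordinate derivatives are bounded is Lipschitz. -/
theorem lip_of_bdd (h : (Fin N → En n) → ℝ) (hs : ContDiff ℝ (⊤ : ℕ∞) h)
    (hb : ∀ c, ∃ C, ∀ U, |fderiv ℝ h U (ev c)| ≤ C) :
    ∃ C, 0 ≤ C ∧ ∀ U W, |h U - h W| ≤ C * ‖U - W‖ := by
  choose C hC using hb
  have h0 : ∀ c, 0 ≤ C c := fun c => (abs_nonneg _).trans (hC c 0)
  refine ⟨∑ c, C c, Finset.sum_nonneg fun c _ => h0 c, fun U W => ?_⟩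
  have := Convex.norm_image_sub_le_of_norm_fderiv_le (𝕜 := ℝ) (f := h) (C := ∑ c, C c) (s := univ) (x := W) (y := U)
    (fun x _ => diff_of_smooth hs x) (fun x _ => ?_) convex_univ trivial trivial
  · simpa using this
  refine ContinuousLinearMap.opNorm_le_bound _ (Finset.sum_nonneg fun c _ => h0 c) fun v => ?_
  conv_lhs => rw [ev_basis v]
  rw [map_sum, Finset.sum_mul]
  refine (norm_sum_le _ _).trans (Finset.sum_le_sum fun c _ => ?_)
  rw [map_smul, norm_smul, mul_comm]
  refine mul_le_mul (hC c x) ?_ (norm_nonneg _) (h0 c)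
  exact (PiLp.norm_apply_le (v c.1) c.2).trans (norm_le_pi_norm v c.1)

theorem UB.rem {Φ : (Fin N → En n) → ℝ} (hΦ : ContDiff ℝ (⊤ : ℕ∞) Φ)
    (hb : ∀ l : List (Fin N × Fin n), 2 ≤ l.length → ∃ C, ∀ U, |dirD (l.map ev) Φ U| ≤ C) 
    (ρ : ℝ) (k : ℕ) (c : Fin N × Fin n) :
    UB {t | ‖t‖ ≤ ρ} k (fun θ t => ((fderiv ℝ (Rem Φ θ) t (ev c) : ℝ) : ℂ)) := by
  simp only [Rem_fderiv hΦ]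
  have hc := contDiff_D (ev c) _ hΦ
  have h0 : ∃ C : ℝ, ∀ θ, ∀ t ∈ {t : Fin N → En n | ‖t‖ ≤ ρ}, ‖((fderiv ℝ Φ (θ + t) (ev c) - fderiv ℝ Φ θ (ev c) : ℝ) : ℂ)‖ ≤ C := by
    obtain ⟨C, hC0, hC⟩ := lip_of_bdd (fun U => fderiv ℝ Φ U (ev c)) hc (fun c' => hb [c', c] (by simp))
    refine ⟨C * ρ, fun θ t ht => ?_⟩
    have := hC (θ + t) θ
    rw [add_sub_cancel_left] at this
    rw [Complex.norm_real]
    exact this.trans (mul_le_mul_of_nonneg_left ht hC0)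
  cases k with
  | zero => exact h0
  | succ k =>
    refine ⟨h0, fun c' => ?_⟩
    have := UB.shift {t : Fin N → En n | ‖t‖ ≤ ρ} k (fun U => fderiv ℝ (fun U => fderiv ℝ Φ U (ev c)) U (ev c')) (contDiff_D _ _ hc)
      (fun l => by
        have := hb (l ++ [c', c]) (by simp)
        simpa only [List.map_append, dirD_append, List.map_cons, List.map_nil, dirD_cons, dirD_nil] using this)
    convert this using 3 with θ t
    have e0 : HasFDerivAt (fun t => fderiv ℝ Φ (θ + t) (ev c) - fderiv ℝ Φ θ (ev c))
       (fderiv ℝ (fun U => fderiv ℝ Φ U (ev c)) (θ + t)) t := by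
      have := (diff_of_smooth hc (θ + t)).hasFDerivAt.comp t ((hasFDerivAt_id t).const_add θ)
      have h2 := this.sub_const (fderiv ℝ Φ θ (ev c))
      simpa [Function.comp_def] using h2
    have e1 := Complex.ofRealCLM.hasFDerivAt.comp t e0
    have e2 := e1.fderiv
    simp only [Function.comp_def, Complex.ofRealCLM_apply] at e2
    rw [e2]
    simp

theorem UB.of_compact {S : Set (Fin N → En n)} (hS : IsCompact S) (k : ℕ) : ∀ (W : (Fin N → En n) → ℂ)
    (_ : ContDiff ℝ (⊤ : ℕ∞) W), UB S k (fun (_ : Θ) t => W t) := by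
  have key : ∀ (W : (Fin N → En n) → ℂ) (_ : ContDiff ℝ (⊤ : ℕ∞) W), ∃ C : ℝ, ∀ θ : Θ, ∀ t ∈ S, ‖W t‖ ≤ C := by
    intro W hW
    obtain ⟨C, hC⟩ := hS.exists_bound_of_continuousOn hW.continuous.continuousOn
    exact ⟨C, fun _ t ht => hC t ht⟩
  induction k with
  | zero => intro W hW; exact key W hW
  | succ k ih =>
    intro W hW
    exact ⟨key W hW, fun c => ih _ (contDiff_D _ _ hW)⟩

theorem dirD_zero_off (L : List (Fin N → En n)) (f : (Fin N → En n) → ℂ) :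
    tsupport (dirD L f) ⊆ tsupport f := by
  induction L with
  | nil => exact subset_rfl
  | cons v L ih =>
    refine subset_trans ?_ ih
    rw [dirD_cons]
    refine closure_minimal ?_ (isClosed_tsupport _)
    intro x hx
    have : x ∈ Function.support (fderiv ℝ (dirD L f)) := by
      intro h
      apply hx
      simp [h]
    exact (support_fderiv_subset ℝ) this

end UBsec

section Hadamard

open Set Filter Topology Metric

variable {E : Type*} [NormedAddCommGroup E] [NormedSpace ℝ E] [CompleteSpace E]

/-- A map which is uniformly locally expanding and uniformly locally onto is injective. -/
theorem injective_of_uniform_local (ψ : E → E) (hc : Continuous ψ) (K δ ρ : ℝ) (hδ : 0 < δ) (hρ : 0 < ρ)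
    (hexp : ∀ x y, ‖x - y‖ ≤ δ → ‖x - y‖ ≤ K * ‖ψ x - ψ y‖)
    (hsurj : ∀ z w, ‖w - ψ z‖ ≤ ρ → ∃ a, ‖a - z‖ ≤ δ / 3 ∧ ψ a = w) :
    Function.Injective ψ := by
  intro z0 z1 h01
  set y := ψ z0 with hy
  set seg : ℝ → E := fun t => z0 + t • (z1 - z0) with hseg
  have hsegc : Continuous seg := by fun_prop
  have hγc : Continuous (fun t => ψ (seg t) - y) := (hc.comp hsegc).sub continuous_const
  obtain ⟨B, hB⟩ := (isCompact_Icc (a := (0:ℝ)) (b := 1)).exists_bound_of_continuousOn hγc.continuousOn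
  obtain ⟨k, hk⟩ := exists_nat_gt ((max B 0) / ρ)
  have hk0 : (0:ℝ) < k := lt_of_le_of_lt (by positivity) hk
  have key : ∀ i : ℕ, i ≤ k → ∃ H : ℝ → E, ContinuousOn H (Icc 0 1) ∧ H 0 = z0 ∧ H 1 = z1 ∧
      ∀ t ∈ Icc (0:ℝ) 1, ψ (H t) = y + (1 - (i:ℝ) / k) • (ψ (seg t) - y) := by
    intro i
    induction i with
    | zero =>
      intro _
      refine ⟨seg, hsegc.continuousOn, by simp [hseg], by simp [hseg], ?_⟩
      intro t _
      simp
    | succ i ih =>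
      intro hi
      obtain ⟨H, hHc, hH0, hH1, hH⟩ := ih (by omega)
      set W : ℝ → E := fun t => y + (1 - ((i+1 : ℕ):ℝ) / k) • (ψ (seg t) - y) with hW
      have hWc : Continuous W := by
        exact continuous_const.add (hγc.const_smul _)
      have hclose : ∀ t ∈ Icc (0:ℝ) 1, ‖W t - ψ (H t)‖ ≤ ρ := by
        intro t ht
        rw [hH t ht, hW]
        have : (y + (1 - ((i+1 : ℕ):ℝ) / k) • (ψ (seg t) - y)) -
            (y + (1 - (i:ℝ) / k) • (ψ (seg t) - y)) = (-(1/(k:ℝ))) • (ψ (seg t) - y) := by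
          rw [add_sub_add_left_eq_sub, ← sub_smul]
          congr 1
          push_cast
          ring
        simp only [this, norm_smul, norm_neg, norm_div, norm_one, RCLike.norm_natCast]
        have h1 := hB t ht
        rw [div_lt_iff₀ hρ] at hk
        rw [div_mul_eq_mul_div, one_mul, div_le_iff₀ hk0]
        nlinarith [le_max_left B 0]
      choose! L hL1 hL2 using hsurj
      have e0 : W 0 = ψ z0 := by simp [hW, hseg, ← hy]
      have e1 : W 1 = ψ z1 := by simp [hW, hseg, ← h01]
      refine ⟨fun t => L (H t) (W t), ?_, ?_, ?_, ?_⟩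
      · intro t ht
        rw [Metric.continuousWithinAt_iff']
        intro ε hε
        have h1 := Metric.continuousWithinAt_iff'.1 (hHc t ht) (δ/3) (by positivity)
        have h2 := Metric.continuousWithinAt_iff'.1 (hWc.continuousWithinAt (s := Icc 0 1) (x := t))
          (ε / (|K|+1)) (by positivity)
        filter_upwards [h1, h2, self_mem_nhdsWithin] with s hs1 hs2 hs
        rw [dist_eq_norm] at *
        have a1 := hL1 (H s) (W s) (hclose s hs)
        have a2 := hL1 (H t) (W t) (hclose t ht)
        have b1 := hL2 (H s) (W s) (hclose s hs)
        have b2 := hL2 (H t) (W t) (hclose t ht)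
        have : ‖L (H s) (W s) - L (H t) (W t)‖ ≤ δ := by
          have : L (H s) (W s) - L (H t) (W t) = (L (H s) (W s) - H s) + (H s - H t)
            + (-(L (H t) (W t) - H t)) := by abel
          rw [this]
          refine (norm_add₃_le).trans ?_
          rw [norm_neg]
          linarith
        have h3 := hexp _ _ this
        rw [b1, b2] at h3
        calc _ ≤ K * ‖W s - W t‖ := h3
          _ ≤ (|K|+1) * ‖W s - W t‖ := by gcongr; linarith [le_abs_self K]
          _ < (|K|+1) * (ε / (|K|+1)) := by gcongr
          _ = ε := by field_simp
      · have h := hclose 0 (by simp)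
        have a1 := hL1 (H 0) (W 0) h
        have b1 := hL2 (H 0) (W 0) h
        rw [hH0] at a1 b1
        change L (H 0) (W 0) = z0
        rw [hH0]
        have := hexp _ _ (a1.trans (by linarith))
        have hz : ‖ψ (L z0 (W 0)) - ψ z0‖ = 0 := by rw [b1, e0]; simp
        rw [hz, mul_zero] at this
        exact sub_eq_zero.1 (norm_le_zero_iff.1 this)
      · have h := hclose 1 (by simp)
        have a1 := hL1 (H 1) (W 1) h
        have b1 := hL2 (H 1) (W 1) h
        rw [hH1] at a1 b1
        change L (H 1) (W 1) = z1
        rw [hH1]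
        have := hexp _ _ (a1.trans (by linarith))
        have hz : ‖ψ (L z1 (W 1)) - ψ z1‖ = 0 := by rw [b1, e1]; simp
        rw [hz, mul_zero] at this
        exact sub_eq_zero.1 (norm_le_zero_iff.1 this)
      · intro t ht
        exact hL2 _ _ (hclose t ht)
  obtain ⟨H, hHc, hH0, hH1, hH⟩ := key k le_rfl
  have hconst : ∀ t ∈ Icc (0:ℝ) 1, ψ (H t) = y := by
    intro t ht
    rw [hH t ht, div_self hk0.ne']
    simp
  -- uniform continuity gives steps
  have hu := (isCompact_Icc (a := (0:ℝ)) (b := 1)).uniformContinuousOn_of_continuous hHc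
  rw [Metric.uniformContinuousOn_iff] at hu
  obtain ⟨η, hη, hu⟩ := hu δ hδ
  have hloc : ∀ s ∈ Icc (0:ℝ) 1, ∀ t ∈ Icc (0:ℝ) 1, dist s t < η → H s = H t := by
    intro s hs t ht hst
    have h1 := (hu s hs t ht hst).le
    rw [dist_eq_norm] at h1
    have h2 := hexp _ _ h1
    rw [hconst s hs, hconst t ht] at h2
    simp only [sub_self, norm_zero, mul_zero] at h2
    exact sub_eq_zero.1 (norm_le_zero_iff.1 h2)
  obtain ⟨q, hq⟩ := exists_nat_gt (1 / η)
  have hq0 : (0:ℝ) < q := lt_of_le_of_lt (by positivity) hq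
  have step : ∀ i : ℕ, i ≤ q → H ((i:ℝ)/q) = z0 := by
    intro i
    induction i with
    | zero => intro _; simp [hH0]
    | succ i ih =>
      intro hi
      rw [← ih (by omega)]
      have hi' : ((i+1:ℕ):ℝ) ≤ q := by exact_mod_cast hi
      push_cast at hi' ⊢
      apply hloc
      · exact ⟨by positivity, by rw [div_le_one hq0]; exact hi'⟩
      · exact ⟨by positivity, by rw [div_le_one hq0]; linarith⟩
      · rw [Real.dist_eq, ← sub_div, add_sub_cancel_left, abs_of_pos (by positivity)]
        rw [div_lt_iff₀ hη] at hq
        rw [div_lt_iff₀ hq0]; linarith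
  have := step q le_rfl
  rw [div_self hq0.ne', hH1] at this
  exact this.symm

theorem hadamard_injective (ψ : E → E) (ψ' : E → (E ≃L[ℝ] E))
    (hder : ∀ x, HasFDerivAt ψ (ψ' x : E →L[ℝ] E) x) (K M : ℝ) (hK0 : 0 < K) (hM0 : 0 < M)
    (hK : ∀ x v, ‖(ψ' x).symm v‖ ≤ K * ‖v‖)
    (hM : ∀ x y, ‖(ψ' x : E →L[ℝ] E) - (ψ' y : E →L[ℝ] E)‖ ≤ M * ‖x - y‖) :
    Function.Injective ψ := by
  set δ : ℝ := 1 / (2 * K * M) with hδ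
  have hδ0 : 0 < δ := by positivity
  have happ : ∀ z, ApproximatesLinearOn ψ (ψ' z : E →L[ℝ] E) (closedBall z δ)
      (Real.toNNReal (1 / (2 * K))) := by
    intro z x hx y hy
    have := (convex_closedBall z δ).norm_image_sub_le_of_norm_hasFDerivWithin_le'
      (f := ψ) (f' := fun x => (ψ' x : E →L[ℝ] E)) (φ := (ψ' z : E →L[ℝ] E)) (C := 1/(2*K))
      (fun x _ => (hder x).hasFDerivWithinAt) ?_ hy hx
    · rwa [Real.coe_toNNReal _ (by positivity)]
    · intro w hw
      refine (hM w z).trans ?_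
      rw [mem_closedBall, dist_eq_norm] at hw
      calc _ ≤ M * δ := by gcongr
        _ = _ := by rw [hδ]; field_simp
  refine injective_of_uniform_local ψ (continuous_iff_continuousAt.2 fun x => (hder x).continuousAt)
    (2 * K) δ ((K⁻¹ - 1 / (2 * K)) * (δ / 3)) hδ0 ?_ ?_ ?_
  · have : K⁻¹ - 1 / (2 * K) = 1 / (2 * K) := by field_simp; norm_num
    rw [this]; positivity
  · intro x y hxy
    have h := happ y x (by rwa [mem_closedBall, dist_eq_norm]) y (by simp [hδ0.le])
    rw [Real.coe_toNNReal _ (by positivity)] at h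
    have h2 := hK y ((ψ' y) (x - y))
    rw [ContinuousLinearEquiv.symm_apply_apply] at h2
    have h3 : ‖(ψ' y) (x - y)‖ ≤ ‖ψ x - ψ y‖ + 1 / (2 * K) * ‖x - y‖ := by
      have : (ψ' y) (x - y) = (ψ x - ψ y) - (ψ x - ψ y - (ψ' y : E →L[ℝ] E) (x - y)) := by
        simp
      rw [this]
      exact (norm_sub_le _ _).trans (by linarith)
    have h4 : ‖x - y‖ ≤ K * (‖ψ x - ψ y‖ + 1 / (2 * K) * ‖x - y‖) := h2.trans (by gcongr)
    have h5 : K * (‖ψ x - ψ y‖ + 1 / (2 * K) * ‖x - y‖) = K * ‖ψ x - ψ y‖ + ‖x - y‖ / 2 := by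
      field_simp
    linarith
  · intro z w hw
    let R : ContinuousLinearMap.NonlinearRightInverse (ψ' z : E →L[ℝ] E) :=
      { toFun := (ψ' z).symm
        nnnorm := K.toNNReal
        bound' := by intro v; rw [Real.coe_toNNReal _ hK0.le]; exact hK z v
        right_inv' := by intro v; simp }
    have := (happ z).surjOn_closedBall_of_nonlinearRightInverse R (ε := δ / 3) (b := z)
      (by positivity) (closedBall_subset_closedBall (by linarith))
    have hm : w ∈ closedBall (ψ z) (((R.nnnorm : ℝ)⁻¹ - (Real.toNNReal (1 / (2 * K)) : ℝ)) * (δ / 3)) := by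
      rw [mem_closedBall, dist_eq_norm]
      have : (R.nnnorm : ℝ) = K := Real.coe_toNNReal _ hK0.le
      rw [this, Real.coe_toNNReal _ (by positivity)]
      exact hw
    obtain ⟨a, ha, hb⟩ := this hm
    exact ⟨a, by rwa [mem_closedBall, dist_eq_norm] at ha, hb⟩

end Hadamard

section Planch
open Set Filter Topology FourierTransform

theorem fourier_ae_eq_L2 {n : ℕ} (G : En n → ℂ) (hG : Integrable G) (hG2 : MemLp G 2) :
    (𝓕 (hG2.toLp G) : Lp (α := En n) ℂ 2) =ᵐ[volume] 𝓕 G := by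
  have hFc : Continuous (𝓕 G) :=
    VectorFourier.fourierIntegral_continuous Real.continuous_fourierChar continuous_inner hG
  refine ae_eq_of_integral_contDiff_smul_eq ?_ hFc.locallyIntegrable ?_
  · exact (Lp.memLp _).locallyIntegrable (by norm_num)
  intro g hg hgs
  have hg' : ContDiff ℝ (⊤ : ℕ∞) (fun x => (g x : ℂ)) := Complex.ofRealCLM.contDiff.comp hg
  have hgs' : HasCompactSupport (fun x => (g x : ℂ)) := hgs.comp_left (g := Complex.ofReal) (by simp)
  let γ : 𝓢(En n, ℂ) := hgs'.toSchwartzMap hg'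
  have h1 := congrArg (fun T => T γ) (MeasureTheory.Lp.fourier_toTemperedDistribution_eq (hG2.toLp G))
  simp only [TemperedDistribution.fourier_apply, MeasureTheory.Lp.toTemperedDistribution_apply] at h1
  let F2 : Lp (α := En n) ℂ 2 := 𝓕 (hG2.toLp G)
  change ∫ x, g x • F2 x = _
  have h2 : ∫ x, g x • F2 x = ∫ x, γ x • F2 x := rfl
  have h3 : ∫ x, g x • 𝓕 G x = ∫ x, γ x • 𝓕 G x := rfl
  rw [h2, h3, ← h1]
  have h4 : ∫ x, (𝓕 γ) x • (hG2.toLp G) x = ∫ x, (𝓕 γ) x • G x := by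
    apply integral_congr_ae
    filter_upwards [hG2.coeFn_toLp] with x hx
    rw [hx]
  rw [h4]
  have := VectorFourier.integral_fourierIntegral_smul_eq_flip (μ := volume) (ν := volume) (e := Real.fourierChar)
    (L := innerₗ (En n)) (f := γ) (g := G) Real.continuous_fourierChar continuous_inner γ.integrable hG
  rw [flip_innerₗ] at this
  exact this

theorem lintegral_fourier_sq {n : ℕ} (G : En n → ℂ) (hG : Integrable G) :
    ∫⁻ q, ‖𝓕 G q‖ₑ ^ 2 ≤ ∫⁻ t, ‖G t‖ₑ ^ 2 := by
  by_cases hG2 : MemLp G 2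
  · have h1 := MeasureTheory.Lp.norm_fourier_eq (hG2.toLp G)
    rw [Lp.norm_def, Lp.norm_def, eLpNorm_congr_ae (fourier_ae_eq_L2 G hG hG2),
      eLpNorm_congr_ae hG2.coeFn_toLp] at h1
    have hm : eLpNorm (𝓕 G) 2 volume ≠ ⊤ := by
      rw [← eLpNorm_congr_ae (fourier_ae_eq_L2 G hG hG2)]
      exact (Lp.memLp _).2.ne
    rw [ENNReal.toReal_eq_toReal_iff' hm hG2.2.ne] at h1
    have e : ∀ F : En n → ℂ, ∫⁻ q, ‖F q‖ₑ ^ 2 = eLpNorm F 2 volume ^ 2 := by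
      intro F
      have := eLpNorm_nnreal_pow_eq_lintegral (f := F) (μ := volume) (p := 2) (by norm_num)
      simpa using this.symm
    rw [e, e, h1]
  · have : ∫⁻ t, ‖G t‖ₑ ^ 2 = ⊤ := by
      by_contra h
      apply hG2
      refine ⟨hG.1, ?_⟩
      have := eLpNorm_nnreal_pow_eq_lintegral (f := G) (μ := volume) (p := 2) (by norm_num)
      simp only [NNReal.coe_ofNat, ENNReal.coe_ofNat, ENNReal.rpow_ofNat] at this
      rw [← this] at h
      by_contra h'
      rw [not_lt, top_le_iff] at h'
      rw [h'] at h
      simp at h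
    rw [this]; exact le_top

theorem ft_eq_fourier {n : ℕ} (G : En n → ℂ) (q : En n) :
    ft G q = 𝓕 G ((2 * Real.pi)⁻¹ • q) := by
  rw [Real.fourier_eq', ft]
  congr 1
  ext y
  rw [inner_smul_right, smul_eq_mul]
  congr 2
  have : Real.pi ≠ 0 := Real.pi_ne_zero
  rw [show (-2 * Real.pi * ((2 * Real.pi)⁻¹ * ⟪y, q⟫)) = -⟪y, q⟫ by field_simp]
  push_cast
  ring

theorem lintegral_ft_sq {n : ℕ} (G : En n → ℂ) (hG : Integrable G) :
    ∫⁻ q, ‖ft G q‖ₑ ^ 2 ≤ ENNReal.ofReal ((2 * Real.pi) ^ n) * ∫⁻ t, ‖G t‖ₑ ^ 2 := by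
  have hFc : Continuous (𝓕 G) :=
    VectorFourier.fourierIntegral_continuous Real.continuous_fourierChar continuous_inner hG
  have h2 : (2 * Real.pi)⁻¹ ≠ 0 := by positivity
  simp_rw [ft_eq_fourier]
  have h := lintegral_map (μ := (volume : Measure (En n))) (f := fun q => ‖𝓕 G q‖ₑ ^ 2)
    (g := fun q : En n => (2 * Real.pi)⁻¹ • q) (by fun_prop) (by fun_prop)
  rw [← h, Measure.map_addHaar_smul _ h2, lintegral_smul_measure]
  have e : |(((2 * Real.pi)⁻¹) ^ Module.finrank ℝ (En n))⁻¹| = (2 * Real.pi) ^ n := by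
    rw [finrank_euclideanSpace_fin, inv_pow, inv_inv, abs_of_pos (by positivity)]
  rw [e, smul_eq_mul]
  refine mul_le_mul_right ?_ _
  exact lintegral_fourier_sq G hG

end Planch

section CV
open Set Filter Topology

/-- Insert a pair, with `η` in slot `j`. -/
def pr {n : ℕ} (j : Fin 2) (η z : En n) : Fin 2 → En n := if j = 0 then ![η, z] else ![z, η]

/-- The other index. -/
def oth (j : Fin 2) : Fin 2 := if j = 0 then 1 else 0

theorem pr_eq {n : ℕ} (j : Fin 2) (η z : En n) : pr j η z = pr j η 0 + Pi.single (oth j) z := by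
  fin_cases j
  · funext k; fin_cases k <;> simp [pr, oth]
  · funext k; fin_cases k <;> simp [pr, oth]

theorem pr_self {n : ℕ} (j : Fin 2) (η z : En n) : pr j η z j = η := by
  fin_cases j <;> simp [pr]

theorem pr_measurable {n : ℕ} (j : Fin 2) : Measurable fun p : En n × En n => pr j p.1 p.2 := by
  refine measurable_pi_lambda _ fun k => ?_
  fin_cases j <;> fin_cases k <;> simp [pr] <;> fun_prop

theorem lintegral_pr {n : ℕ} (j : Fin 2) (f : (Fin 2 → En n) → ℝ≥0∞) (hf : Measurable f) :
    ∫⁻ θ, f θ = ∫⁻ η, ∫⁻ z, f (pr j η z) := by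
  have hp := (volume_preserving_piFinTwo (fun _ : Fin 2 => En n)).symm
  rw [← hp.lintegral_comp_emb (MeasurableEquiv.measurableEmbedding _)]
  have h2 : ∀ p : En n × En n, (MeasurableEquiv.piFinTwo (fun _ : Fin 2 => En n)).symm p = ![p.1, p.2] := by
    intro p
    rw [MeasurableEquiv.symm_apply_eq]
    rfl
  simp only [h2]
  have hm : Measurable fun p : En n × En n => f ![p.1, p.2] := by
    have := hf.comp (pr_measurable (n := n) 0)
    simpa [pr, Function.comp_def] using this
  fin_cases j
  · exact lintegral_prod _ hm.aemeasurable
  · simp [pr]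
    exact lintegral_prod_symm _ hm.aemeasurable

/-- partial gradient in slot `j`. -/
def grd {n : ℕ} (Φ : (Fin 2 → En n) → ℝ) (j : Fin 2) (θ : Fin 2 → En n) : En n :=
  WithLp.toLp 2 fun i => fderiv ℝ Φ θ (ev (j, i))

theorem grd_apply {n : ℕ} (Φ : (Fin 2 → En n) → ℝ) (j : Fin 2) (θ : Fin 2 → En n) (i) :
    grd Φ j θ i = fderiv ℝ Φ θ (ev (j, i)) := rfl

theorem grd_contDiff {n : ℕ} (Φ : (Fin 2 → En n) → ℝ) (hΦ : ContDiff ℝ (⊤ : ℕ∞) Φ) (j : Fin 2) :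
    ContDiff ℝ (⊤ : ℕ∞) (grd Φ j) := by
  rw [contDiff_euclidean]
  intro i
  exact contDiff_D _ _ hΦ

theorem fderiv_eq_grd {n : ℕ} (Φ : (Fin 2 → En n) → ℝ) (θ t : Fin 2 → En n) :
    fderiv ℝ Φ θ t = ∑ j, ⟪t j, grd Φ j θ⟫ := by
  conv_lhs => rw [ev_basis t]
  rw [map_sum, Fintype.sum_prod_type]
  refine Finset.sum_congr rfl fun j _ => ?_
  rw [PiLp.inner_apply]
  refine Finset.sum_congr rfl fun i _ => ?_
  simp [grd_apply, mul_comm]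

theorem opnorm_le_entries {n : ℕ} (A : En n →L[ℝ] En n) : ‖A‖ ≤ ∑ k, ∑ i, |A (eb k) i| := by
  refine ContinuousLinearMap.opNorm_le_bound _ (by positivity) fun v => ?_
  have hv : v = ∑ k, v k • eb k := by
    ext i
    simp [eb, Pi.single_apply]
  conv_lhs => rw [hv]
  rw [map_sum, Finset.sum_mul]
  refine (norm_sum_le _ _).trans (Finset.sum_le_sum fun k _ => ?_)
  rw [map_smul, norm_smul, mul_comm]
  refine mul_le_mul ?_ (PiLp.norm_apply_le v k) (norm_nonneg _) (by positivity)
  have hw : A (eb k) = ∑ i, A (eb k) i • eb i := by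
    ext i
    simp [eb, Pi.single_apply]
  conv_lhs => rw [hw]
  refine (norm_sum_le _ _).trans (Finset.sum_le_sum fun i _ => ?_)
  rw [norm_smul]
  simp [eb]

/-- Uniform bound for the inverse. -/
theorem inv_bound (n : ℕ) (c M : ℝ) (hc : 0 < c) : ∃ K : ℝ, 0 < K ∧ ∀ A : En n →L[ℝ] En n, c ≤ |A.det| → ‖A‖ ≤ M →
    ∀ v, ‖v‖ ≤ K * ‖A v‖ := by
  have hcomp : IsCompact {A : En n →L[ℝ] En n | c ≤ |A.det| ∧ ‖A‖ ≤ M} := by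
    refine Metric.isCompact_of_isClosed_isBounded ?_ ?_
    · exact (isClosed_le continuous_const ContinuousLinearMap.continuous_det.abs).inter
        (isClosed_le continuous_norm continuous_const)
    · refine (Metric.isBounded_closedBall (x := (0 : En n →L[ℝ] En n)) (r := M)).subset fun A hA => ?_
      simpa using hA.2
  have hunit : ∀ A : En n →L[ℝ] En n, c ≤ |A.det| → IsUnit A := by
    intro A hA
    have h0 : A.det ≠ 0 := by
      intro h
      rw [h, abs_zero] at hA
      linarith
    exact ⟨(A.toContinuousLinearEquivOfDetNeZero h0).toUnit, by ext v; rfl⟩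
  obtain ⟨K, hK⟩ := hcomp.exists_bound_of_continuousOn (f := Ring.inverse) (by
    intro A hA
    obtain ⟨u, rfl⟩ := hunit A hA.1
    exact (NormedRing.inverse_continuousAt u).continuousWithinAt)
  refine ⟨max K 1, by positivity, fun A h1 h2 v => ?_⟩
  have h3 := hK A ⟨h1, h2⟩
  have h4 := Ring.inverse_mul_cancel A (hunit A h1)
  have h5 : Ring.inverse A (A v) = v := by
    have := congrArg (fun B : En n →L[ℝ] En n => B v) h4
    simpa using this
  calc ‖v‖ = ‖Ring.inverse A (A v)‖ := by rw [h5]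
    _ ≤ ‖Ring.inverse A‖ * ‖A v‖ := ContinuousLinearMap.le_opNorm _ _
    _ ≤ max K 1 * ‖A v‖ := mul_le_mul_of_nonneg_right (h3.trans (le_max_left _ _)) (norm_nonneg _)

theorem change_var {n : ℕ} (Φ : (Fin 2 → En n) → ℝ) (hΦ : ContDiff ℝ (⊤ : ℕ∞) Φ)
    (hb : ∀ l : List (Fin 2 × Fin n), 2 ≤ l.length → ∃ C, ∀ U, |dirD (l.map ev) Φ U| ≤ C)
    (c : ℝ) (hc : 0 < c) 
    (hdet : ∀ U, c ≤ |(Matrix.of fun a b : Fin n => dirD [ev (0, a), ev (1, b)] Φ U).det|)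
    (j : Fin 2) (η : En n) (G : En n → ℝ≥0∞) :
    ∫⁻ z, G (grd Φ j (pr j η z)) ≤ ENNReal.ofReal c⁻¹ * ∫⁻ q, G q := by
  set ψ : En n → En n := fun z => grd Φ j (pr j η z) with hψ
  have hpr : ∀ z, HasFDerivAt (fun z => pr j η z) (ContinuousLinearMap.single ℝ (fun _ : Fin 2 => En n) (oth j)) z := by
    intro z
    have : (fun z => pr j η z) = fun z => pr j η 0 + ContinuousLinearMap.single ℝ (fun _ : Fin 2 => En n) (oth j) z := by
      funext z
      rw [pr_eq]
      rfl
    rw [this]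
    exact (ContinuousLinearMap.hasFDerivAt _).const_add _
  have hd : ∀ z, HasFDerivAt ψ (fderiv ℝ ψ z) z := by
    intro z
    have := (diff_of_smooth (grd_contDiff Φ hΦ j) (pr j η z)).hasFDerivAt.comp z (hpr z)
    exact this.differentiableAt.hasFDerivAt
  have hentry : ∀ z k i, fderiv ℝ ψ z (eb k) i = dirD [ev (oth j, k), ev (j, i)] Φ (pr j η z) := by
    intro z k i
    have h1 : HasFDerivAt (fun z => ψ z i) ((EuclideanSpace.proj i : En n →L[ℝ] ℝ).comp (fderiv ℝ ψ z)) z :=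
      (EuclideanSpace.proj i : En n →L[ℝ] ℝ).hasFDerivAt.comp z (hd z)
    have h2 := (diff_of_smooth (contDiff_D (ev (j, i)) _ hΦ) (pr j η z)).hasFDerivAt.comp z (hpr z)
    have h3 := congrArg (fun A : En n →L[ℝ] ℝ => A (eb k)) (h1.unique h2)
    simp only [ContinuousLinearMap.comp_apply] at h3
    exact h3
  have hdetψ : ∀ z, c ≤ |(fderiv ℝ ψ z).det| := by
    intro z
    refine (hdet (pr j η z)).trans (le_of_eq ?_)
    congr 1
    have h1 : (fderiv ℝ ψ z).det = (LinearMap.toMatrix (EuclideanSpace.basisFun (Fin n) ℝ).toBasis (EuclideanSpace.basisFun (Fin n) ℝ).toBasis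
      (fderiv ℝ ψ z : En n →ₗ[ℝ] En n)).det := by
      rw [LinearMap.det_toMatrix]
    rw [h1]
    have h2 : ∀ i k, (LinearMap.toMatrix (EuclideanSpace.basisFun (Fin n) ℝ).toBasis (EuclideanSpace.basisFun (Fin n) ℝ).toBasis
      (fderiv ℝ ψ z : En n →ₗ[ℝ] En n)) i k = dirD [ev (oth j, k), ev (j, i)] Φ (pr j η z) := by
      intro i k
      rw [← hentry, LinearMap.toMatrix_apply]
      simp [eb]
    fin_cases j
    · congr 1
      ext a b
      rw [h2]
      simp only [oth, Matrix.of_apply]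
      exact congrFun (dirD_perm (List.Perm.swap _ _ []) Φ hΦ) _
    · rw [← Matrix.det_transpose]
      congr 1
      ext a b
      rw [h2]
      rfl
  have hbent : ∃ M : ℝ, ∀ z, ‖fderiv ℝ ψ z‖ ≤ M := by
    choose C hC using fun (k i : Fin n) => hb [(oth j, k), (j, i)] (by simp)
    refine ⟨∑ k, ∑ i, C k i, fun z => (opnorm_le_entries _).trans ?_⟩
    refine Finset.sum_le_sum fun k _ => Finset.sum_le_sum fun i _ => ?_
    rw [hentry]
    exact hC k i _
  obtain ⟨M, hM⟩ := hbent
  obtain ⟨K, hK0, hK⟩ := inv_bound n c M hc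
  have hlip : ∃ M : ℝ, 0 < M ∧ ∀ z y, ‖fderiv ℝ ψ z - fderiv ℝ ψ y‖ ≤ M * ‖z - y‖ := by
    choose C hC0 hC using fun (k i : Fin n) => lip_of_bdd (dirD [ev (oth j, k), ev (j, i)] Φ) (contDiff_dirD _ _ hΦ)
      (fun c' => hb [c', (oth j, k), (j, i)] (by simp))
    refine ⟨(∑ k, ∑ i, C k i) + 1, ?_, fun z y => (opnorm_le_entries _).trans ?_⟩
    · have : 0 ≤ ∑ k, ∑ i, C k i := Finset.sum_nonneg fun k _ => Finset.sum_nonneg fun i _ => hC0 k i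
      linarith
    have h1 : ∑ k, ∑ i, |(fderiv ℝ ψ z - fderiv ℝ ψ y) (eb k) i| ≤ (∑ k, ∑ i, C k i) * ‖z - y‖ := by
      simp only [Finset.sum_mul]
      refine Finset.sum_le_sum fun k _ => Finset.sum_le_sum fun i _ => ?_
      rw [sub_apply, PiLp.sub_apply, hentry, hentry]
      refine (hC k i _ _).trans (le_of_eq ?_)
      congr 1
      rw [pr_eq j η z, pr_eq j η y, add_sub_add_left_eq_sub, ← Pi.single_sub, Pi.norm_single]
    refine h1.trans (mul_le_mul_of_nonneg_right (by linarith) (norm_nonneg _))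
  obtain ⟨M', hM'0, hM'⟩ := hlip
  have hne : ∀ z, (fderiv ℝ ψ z).det ≠ 0 := by
    intro z h
    have := hdetψ z
    rw [h, abs_zero] at this
    linarith
  have hinj : Function.Injective ψ := by
    refine hadamard_injective ψ (fun z => (fderiv ℝ ψ z).toContinuousLinearEquivOfDetNeZero (hne z)) ?_ K M' hK0 hM'0 ?_ ?_
    · intro z
      simpa using hd z
    · intro z v
      have := hK (fderiv ℝ ψ z) (hdetψ z) (hM z) (((fderiv ℝ ψ z).toContinuousLinearEquivOfDetNeZero (hne z)).symm v)
      have h2 : (fderiv ℝ ψ z) (((fderiv ℝ ψ z).toContinuousLinearEquivOfDetNeZero (hne z)).symm v) = v := by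
        have := ((fderiv ℝ ψ z).toContinuousLinearEquivOfDetNeZero (hne z)).apply_symm_apply v
        exact this
      rwa [h2] at this
    · intro z y
      simpa using hM' z y
  have hcv := lintegral_image_eq_lintegral_abs_det_fderiv_mul volume MeasurableSet.univ
    (fun z _ => (hd z).hasFDerivWithinAt) hinj.injOn G
  simp only [Measure.restrict_univ] at hcv
  have h1 : ENNReal.ofReal c * ∫⁻ z, G (ψ z) ≤ ∫⁻ q, G q := by
    calc ENNReal.ofReal c * ∫⁻ z, G (ψ z) ≤ ∫⁻ z, ENNReal.ofReal c * G (ψ z) := lintegral_const_mul_le _ _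
      _ ≤ ∫⁻ z, ENNReal.ofReal |(fderiv ℝ ψ z).det| * G (ψ z) := by
          refine lintegral_mono fun z => ?_
          exact mul_le_mul_left (ENNReal.ofReal_le_ofReal (hdetψ z)) _
      _ = ∫⁻ q in ψ '' univ, G q := hcv.symm
      _ ≤ ∫⁻ q, G q := setLIntegral_le_lintegral _ _
  calc ∫⁻ z, G (ψ z) = ENNReal.ofReal c⁻¹ * (ENNReal.ofReal c * ∫⁻ z, G (ψ z)) := by
        rw [← mul_assoc, ← ENNReal.ofReal_mul (by positivity), inv_mul_cancel₀ hc.ne']; simp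
    _ ≤ _ := mul_le_mul_right h1 _

end CV

section Loc
open Set Filter Topology

/-- Compact cut-off set. -/
def Kb (n : ℕ) : Set (En n) := Metric.closedBall 0 2

/-- A bump. -/
def wb (n : ℕ) : ContDiffBump (0 : En n) := ⟨1, 2, by norm_num, by norm_num⟩

/-- Normalised bump. -/
def wf {n : ℕ} (s : En n) : ℝ := (wb n).normed volume s

theorem wf_contDiff {n : ℕ} : ContDiff ℝ (⊤ : ℕ∞) (wf (n := n)) := (wb n).contDiff_normed

theorem wf_zero {n : ℕ} (s : En n) (hs : s ∉ Kb n) : wf s = 0 := by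
  by_contra h
  have h1 : s ∈ Function.support ((wb n).normed volume) := h
  rw [ContDiffBump.support_normed_eq] at h1
  exact hs (Metric.ball_subset_closedBall h1)

theorem wf_integral {n : ℕ} : ∫ s : En n, wf s = 1 := (wb n).integral_normed

theorem wf_integrable {n : ℕ} : Integrable (wf (n := n)) := by
  refine wf_contDiff.continuous.integrable_of_hasCompactSupport ?_
  exact HasCompactSupport.intro (isCompact_closedBall 0 2) wf_zero

/-- Product bump. -/
def Wf {n : ℕ} (t : Fin 2 → En n) : ℂ := ∏ j, (wf (t j) : ℂ)

theorem Wf_contDiff {n : ℕ} : ContDiff ℝ (⊤ : ℕ∞) (Wf (n := n)) := by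
  unfold Wf
  refine contDiff_prod fun j _ => ?_
  exact Complex.ofRealCLM.contDiff.comp (wf_contDiff.comp (contDiff_apply ℝ (En n) j))

theorem Wf_integral {n : ℕ} : ∫ t : Fin 2 → En n, Wf t = 1 := by
  unfold Wf
  rw [integral_fintype_prod_volume_eq_prod (fun (_ : Fin 2) (s : En n) => (wf s : ℂ))]
  have h : ∫ s : En n, (wf s : ℂ) = 1 := by
    rw [integral_complex_ofReal, wf_integral]; simp
  simp [h]

theorem Wf_integrable {n : ℕ} : Integrable (Wf (n := n)) :=
  Integrable.fintype_prod (μ := fun _ => volume) fun _ => wf_integrable.ofReal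

theorem Wf_zero {n : ℕ} (t : Fin 2 → En n) (j : Fin 2) (hj : t j ∉ Kb n) : Wf t = 0 := by
  unfold Wf
  exact Finset.prod_eq_zero (Finset.mem_univ j) (by simp [wf_zero _ hj])

/-- Localised, weighted piece. -/
def Aj {n : ℕ} (r : ℝ) (g : En n → ℂ) (q y : En n) : ℝ≥0∞ :=
  ∫⁻ u, nu r u * ‖ft ((low u).indicator ((Kb n).indicator fun s => g (y + s))) q‖ₑ

theorem b_bound {n : ℕ} (Φ : (Fin 2 → En n) → ℝ) (hΦ : ContDiff ℝ (⊤ : ℕ∞) Φ)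
    (hb : ∀ l : List (Fin 2 × Fin n), 2 ≤ l.length → ∃ C, ∀ U, |dirD (l.map ev) Φ U| ≤ C) :
    ∃ B : ℝ, ∀ θ, ∀ k ≤ 2 * n, ∀ t, ‖dirD ((lc 2 n k).map ev)
      (fun t => Wf t * Complex.exp (Complex.I * Complex.ofReal (Rem Φ θ t))) t‖ ≤ B * (1 + ∑ j, ‖t j‖) ^ ((-1 : ℝ) - k) := by
  set S : Set (Fin 2 → En n) := {t | ‖t‖ ≤ 2} with hS
  have hSc : IsCompact S := by
    have : S = Metric.closedBall 0 2 := by ext; simp [hS]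
    rw [this]
    exact isCompact_closedBall _ _
  have hUB : ∀ k, UB S k (fun θ t => Wf t * Complex.exp (Complex.I * Complex.ofReal (Rem Φ θ t))) := by
    intro k
    exact UB.mul k (fun _ => Wf_contDiff) (fun θ => contDiff_cexp (Rem_contDiff hΦ θ))
      (UB.of_compact hSc k _ Wf_contDiff) (UB.cexp (fun θ => Rem_contDiff hΦ θ) (fun k c => UB.rem hΦ hb 2 k c) k)
  choose C hC using fun k => (hUB (lc 2 n k).length).dirD_bdd (lc 2 n k) le_rfl
  set Cs := ∑ k ∈ Finset.range (2 * n + 1), |C k| with hCs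
  have hCs0 : 0 ≤ Cs := Finset.sum_nonneg fun _ _ => abs_nonneg _
  refine ⟨Cs * 5 ^ ((1 : ℝ) + 2 * n), fun θ k hk t => ?_⟩
  by_cases ht : t ∈ S
  · have h1 : C k ≤ Cs := (le_abs_self _).trans
      (Finset.single_le_sum (f := fun k => |C k|) (fun _ _ => abs_nonneg _) (Finset.mem_range.2 (by omega)))
    refine ((hC k θ t ht).trans h1).trans ?_
    have h2 : (5 : ℝ) ^ ((-1 : ℝ) - 2 * n) ≤ (1 + ∑ j, ‖t j‖) ^ ((-1 : ℝ) - k) := by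
      have hk' : (k : ℝ) ≤ 2 * n := by exact_mod_cast hk
      have hk0 : (0 : ℝ) ≤ k := by positivity
      calc (5 : ℝ) ^ ((-1 : ℝ) - 2 * n) ≤ (5 : ℝ) ^ ((-1 : ℝ) - k) :=
            Real.rpow_le_rpow_of_exponent_le (by norm_num) (by linarith)
        _ ≤ _ := by
            apply Real.rpow_le_rpow_of_nonpos (by positivity)
            · rw [Fin.sum_univ_two]
              have a0 := (norm_le_pi_norm t 0).trans ht
              have a1 := (norm_le_pi_norm t 1).trans ht
              linarith
            · linarith
    calc Cs = Cs * 5 ^ ((1 : ℝ) + 2 * n) * 5 ^ ((-1 : ℝ) - 2 * n) := by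
          rw [mul_assoc, ← Real.rpow_add (by norm_num)]
          ring_nf
          simp
      _ ≤ _ := mul_le_mul_of_nonneg_left h2 (by positivity)
  · have hz : dirD ((lc 2 n k).map ev) (fun t => Wf t * Complex.exp (Complex.I * Complex.ofReal (Rem Φ θ t))) t = 0 := by
      by_contra h
      have h1 := dirD_zero_off _ _ (subset_tsupport _ (show t ∈ Function.support _ from h))
      have h2 : tsupport (fun t => Wf t * Complex.exp (Complex.I * Complex.ofReal (Rem Φ θ t))) ⊆ S := by
        refine closure_minimal ?_ hSc.isClosed
        intro t ht'
        by_contra hn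
        apply ht'
        have : ∃ j, t j ∉ Kb n := by
          by_contra! hall
          apply hn
          refine (pi_norm_le_iff_of_nonneg (by norm_num)).2 fun j => ?_
          simpa [Kb] using hall j
        obtain ⟨j, hj⟩ := this
        simp [Wf_zero t j hj]
      exact ht (h2 h1)
    rw [hz, norm_zero]
    positivity

theorem local_est {n : ℕ} (Φ : (Fin 2 → En n) → ℝ) (hΦ : ContDiff ℝ (⊤ : ℕ∞) Φ)
    (hb : ∀ l : List (Fin 2 × Fin n), 2 ≤ l.length → ∃ C, ∀ U, |dirD (l.map ev) Φ U| ≤ C) :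
    ∃ B : ℝ, ∀ θ, ∀ g : Fin 2 → En n → ℂ, (∀ j, Integrable (g j)) →
      ‖∫ t, Wf t * (Complex.exp (Complex.I * Complex.ofReal (Φ (θ + t))) * ∏ j, g j (θ j + t j))‖ₑ ≤
        ENNReal.ofReal B * ∏ j, Aj (-1 + (-1) / ((2 * n : ℕ) + 1)) (g j) (-grd Φ j θ) (θ j) := by
  obtain ⟨B, hB⟩ := b_bound Φ hΦ hb
  refine ⟨B, fun θ g hg => ?_⟩
  set gl : Fin 2 → En n → ℂ := fun j s => Complex.exp (-(Complex.I * Complex.ofReal ⟪s, -grd Φ j θ⟫)) *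
    (Kb n).indicator (fun s => g j (θ j + s)) s with hgl
  have hgi : ∀ j, Integrable (gl j) := by
    intro j
    have h1 : Integrable ((Kb n).indicator (fun s => g j (θ j + s))) :=
      ((hg j).comp_add_left (θ j)).indicator Metric.isClosed_closedBall.measurableSet
    refine h1.bdd_mul (c := 1) ?_ ?_
    · exact Continuous.aestronglyMeasurable (by fun_prop)
    · refine Eventually.of_forall fun s => ?_
      rw [← mul_neg, ← Complex.ofReal_neg, mul_comm, Complex.norm_exp_ofReal_mul_I]
  have hs := sep (-1) (by norm_num) _ (Wf_contDiff.mul (contDiff_cexp (Rem_contDiff hΦ θ))) B (hB θ) gl hgi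
  have e1 : ∫ t, Wf t * (Complex.exp (Complex.I * Complex.ofReal (Φ (θ + t))) * ∏ j, g j (θ j + t j)) =
      Complex.exp (Complex.I * Complex.ofReal (Φ θ)) *
        ∫ t, Wf t * Complex.exp (Complex.I * Complex.ofReal (Rem Φ θ t)) * ∏ j, gl j (t j) := by
    rw [← integral_const_mul]
    congr 1
    funext t
    by_cases hall : ∀ j, t j ∈ Kb n
    · have h1 : ∏ j, gl j (t j) = Complex.exp (Complex.I * Complex.ofReal (fderiv ℝ Φ θ t)) * ∏ j, g j (θ j + t j) := by
        simp only [hgl, Finset.prod_mul_distrib]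
        congr 1
        · rw [← Complex.exp_sum, fderiv_eq_grd]
          congr 1
          simp [Finset.mul_sum]
          try ring
        · refine Finset.prod_congr rfl fun j _ => ?_
          rw [indicator_of_mem (hall j)]
      rw [h1]
      have h2 : Φ (θ + t) = Φ θ + Rem Φ θ t + fderiv ℝ Φ θ t := by unfold Rem; ring
      rw [h2]
      push_cast
      rw [mul_add, mul_add, Complex.exp_add, Complex.exp_add]
      ring
    · push Not at hall
      obtain ⟨j, hj⟩ := hall
      simp [Wf_zero t j hj]
  rw [e1, enorm_mul]
  have e2 : ‖Complex.exp (Complex.I * Complex.ofReal (Φ θ))‖ₑ = 1 := by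
    rw [← ofReal_norm, mul_comm, Complex.norm_exp_ofReal_mul_I]; simp
  rw [e2, one_mul]
  refine hs.trans (le_of_eq ?_)
  congr 1
  refine Finset.prod_congr rfl fun j _ => ?_
  unfold Aj
  congr 1
  funext u
  congr 2
  unfold ft
  congr 1
  funext s
  simp only [hgl, indicator]
  split_ifs <;> simp

/-- Averaging identity. -/
theorem average {n : ℕ} (F : (Fin 2 → En n) → ℂ) (hF : Integrable F) :
    ‖∫ U, F U‖ₑ ≤ ∫⁻ θ, ‖∫ t, Wf t * F (θ + t)‖ₑ := by
  have hi : Integrable (fun p : (Fin 2 → En n) × (Fin 2 → En n) => Wf p.1 * F p.2) := Wf_integrable.mul_prod hF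
  have hmp : MeasurePreserving (fun p : (Fin 2 → En n) × (Fin 2 → En n) => (p.1, p.2 + p.1)) volume volume := by
    have := measurePreserving_prod_add_right (volume : Measure (Fin 2 → En n)) (volume : Measure (Fin 2 → En n))
    exact this
  have hi2 : Integrable (fun p : (Fin 2 → En n) × (Fin 2 → En n) => Wf p.1 * F (p.2 + p.1)) :=
    hmp.integrable_comp_of_integrable hi
  have h1 : ∫ U, F U = ∫ θ, ∫ t, Wf t * F (θ + t) := by
    calc ∫ U, F U = ∫ t, Wf t * ∫ θ, F (θ + t) := by
          simp only [integral_add_right_eq_self]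
          rw [integral_mul_const, Wf_integral, one_mul]
      _ = ∫ t, ∫ θ, Wf t * F (θ + t) := by simp only [integral_const_mul]
      _ = _ := integral_integral_swap hi2
  rw [h1]
  exact enorm_integral_le_lintegral_enorm _

end Loc

section Core
open Set Filter Topology

/-- Cauchy-Schwarz for lower integrals. -/
theorem lcs {α : Type*} [MeasurableSpace α] (μ : Measure α) (f g : α → ℝ≥0∞)
    (hf : Measurable f) (hg : Measurable g) :
    (∫⁻ x, f x * g x ∂μ) ^ 2 ≤ (∫⁻ x, f x ^ 2 ∂μ) * ∫⁻ x, g x ^ 2 ∂μ := by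
  have h := ENNReal.lintegral_mul_le_Lp_mul_Lq μ Real.HolderConjugate.two_two hf.aemeasurable hg.aemeasurable
  have h2 := pow_le_pow_left₀ (zero_le) h 2
  refine h2.trans (le_of_eq ?_)
  rw [mul_pow, ← ENNReal.rpow_natCast, ← ENNReal.rpow_natCast, ← ENNReal.rpow_mul, ← ENNReal.rpow_mul]
  norm_num

/-- Weighted Cauchy-Schwarz. -/
theorem wcs {α : Type*} [MeasurableSpace α] (μ : Measure α) (w h : α → ℝ≥0∞)
    (hw : Measurable w) (hh : Measurable h) :
    (∫⁻ x, w x * h x ∂μ) ^ 2 ≤ (∫⁻ x, w x ∂μ) * ∫⁻ x, w x * h x ^ 2 ∂μ := by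
  have := lcs μ (fun x => w x ^ (1/2 : ℝ)) (fun x => w x ^ (1/2 : ℝ) * h x) (by fun_prop) (by fun_prop)
  have e : ∀ x, w x ^ (1/2 : ℝ) * w x ^ (1/2 : ℝ) = w x := by
    intro x
    rw [← ENNReal.rpow_add_of_nonneg _ _ (by norm_num) (by norm_num)]
    norm_num
  simp only [← mul_assoc, e, mul_pow] at this
  have e2 : ∀ x, (w x ^ (1/2 : ℝ)) ^ 2 = w x := fun x => by rw [pow_two, e]
  simpa only [e2] using this

/-- Size of the localised Fourier transform. -/
def FL {n : ℕ} (g : En n → ℂ) (q y u : En n) : ℝ≥0∞ :=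
  ‖ft ((low u).indicator ((Kb n).indicator fun s => g (y + s))) q‖ₑ

theorem ftloc_meas {n : ℕ} (g : En n → ℂ) (hg : Measurable g) :
    Measurable fun p : (En n × En n) × En n => FL g p.1.1 p.1.2 p.2 := by
  have hset : MeasurableSet {z : ((En n × En n) × En n) × En n | z.2 ∈ low z.1.2 ∧ z.2 ∈ Kb n} := by
    refine MeasurableSet.inter ?_ ?_
    · exact low_measurable2.preimage
        (show Measurable fun z : ((En n × En n) × En n) × En n => (z.1.2, z.2) by fun_prop)
    · exact (show MeasurableSet (Kb n) from Metric.isClosed_closedBall.measurableSet).preimage measurable_snd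
  have h1 : Measurable fun z : ((En n × En n) × En n) × En n =>
      {z : ((En n × En n) × En n) × En n | z.2 ∈ low z.1.2 ∧ z.2 ∈ Kb n}.indicator
        (fun z => Complex.exp (-(Complex.I * Complex.ofReal ⟪z.2, z.1.1.1⟫)) * g (z.1.1.2 + z.2)) z := by
    refine Measurable.indicator ?_ hset
    refine Measurable.mul ?_ (hg.comp (by fun_prop))
    exact Continuous.measurable (by fun_prop)
  have h2 := (h1.stronglyMeasurable.integral_prod_right' (ν := (volume : Measure (En n)))).measurable.enorm
  refine Eq.mp (congrArg Measurable ?_) h2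
  funext p
  unfold FL ft
  congr 2
  funext s
  simp only [indicator]
  by_cases h1 : s ∈ low p.2 <;> by_cases h2 : s ∈ Kb n <;> simp [h1, h2]

theorem comp3_meas {n : ℕ} {α : Type*} [MeasurableSpace α] (F : (En n × En n) × En n → ℝ≥0∞) (hF : Measurable F)
    (q y u : α → En n) (hq : Measurable q) (hy : Measurable y) (hu : Measurable u) :
    Measurable fun a => F ((q a, y a), u a) := by
  exact hF.comp ((hq.prodMk hy).prodMk hu)

theorem FL_meas {n : ℕ} {α : Type*} [MeasurableSpace α] (g : En n → ℂ) (hg : Measurable g)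
    (q y u : α → En n) (hq : Measurable q) (hy : Measurable y) (hu : Measurable u) :
    Measurable fun a => FL g (q a) (y a) (u a) := by
  exact comp3_meas (fun p => FL g p.1.1 p.1.2 p.2) (ftloc_meas g hg) q y u hq hy hu

theorem Aj_eq {n : ℕ} (r : ℝ) (g : En n → ℂ) (q y : En n) : Aj r g q y = ∫⁻ u, nu r u * FL g q y u := rfl

theorem FL_le {n : ℕ} (g : En n → ℂ) (hgi : Integrable g) (η u : En n) :
    ∫⁻ q, FL g q η u ^ 2 ≤ ENNReal.ofReal ((2 * Real.pi) ^ n) * ∫⁻ s, (Kb n).indicator (fun s => ‖g (η + s)‖ₑ ^ 2) s := by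
  have hK : MeasurableSet (Kb n) := Metric.isClosed_closedBall.measurableSet
  unfold FL
  refine (lintegral_ft_sq _ (((hgi.comp_add_left η).indicator hK).indicator (low_measurable u))).trans ?_
  refine mul_le_mul_right (lintegral_mono fun s => ?_) _
  simp only [indicator]
  split_ifs <;> simp

theorem Aj_sq {n : ℕ} (r : ℝ) (g : En n → ℂ) (hg : Measurable g) (q y : En n) :
    Aj r g q y ^ 2 ≤ (∫⁻ u : En n, nu r u) *
      ∫⁻ u, nu r u * FL g q (y) u ^ 2 :=
  wcs _ _ _ (nu_measurable r) (FL_meas g hg _ _ _ measurable_const measurable_const measurable_id)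

theorem Aj_meas {n : ℕ} (Φ : (Fin 2 → En n) → ℝ) (hΦ : ContDiff ℝ (⊤ : ℕ∞) Φ) (j : Fin 2)
    (r : ℝ) (g : En n → ℂ) (hg : Measurable g) :
    Measurable fun θ : Fin 2 → En n => Aj r g (-grd Φ j θ) (θ j) := by
  have hgr : Measurable (grd Φ j) := (grd_contDiff Φ hΦ j).continuous.measurable
  refine Measurable.lintegral_prod_right' (f := fun z : (Fin 2 → En n) × En n => 
    nu r z.2 * FL g (-grd Φ j z.1) (z.1 j) z.2) ?_
  refine ((nu_measurable r).comp measurable_snd).mul ?_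
  exact FL_meas g hg _ _ _ (by fun_prop) (by fun_prop) (by fun_prop)

theorem Aj_L2 {n : ℕ} (Φ : (Fin 2 → En n) → ℝ) (hΦ : ContDiff ℝ (⊤ : ℕ∞) Φ)
    (hb : ∀ l : List (Fin 2 × Fin n), 2 ≤ l.length → ∃ C, ∀ U, |dirD (l.map ev) Φ U| ≤ C)
    (c : ℝ) (hc : 0 < c)
    (hdet : ∀ U, c ≤ |(Matrix.of fun a b : Fin n => dirD [ev (0, a), ev (1, b)] Φ U).det|)
    (j : Fin 2) (r : ℝ) (g : En n → ℂ) (hg : Measurable g) (hgi : Integrable g) :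
    ∫⁻ θ : Fin 2 → En n, Aj r g (-grd Φ j θ) (θ j) ^ 2 ≤
      (∫⁻ u : En n, nu r u) * ((∫⁻ u : En n, nu r u) * (ENNReal.ofReal c⁻¹ * (ENNReal.ofReal ((2 * Real.pi) ^ n) *
        (volume (Kb n) * ∫⁻ s, ‖g s‖ₑ ^ 2)))) := by
  have hgr : Measurable (grd Φ j) := (grd_contDiff Φ hΦ j).continuous.measurable
  have hK : MeasurableSet (Kb n) := Metric.isClosed_closedBall.measurableSet
  set V := ∫⁻ u : En n, nu r u with hV
  have hm3 : Measurable fun z : (Fin 2 → En n) × En n =>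
      FL g (-grd Φ j z.1) (z.1 j) z.2 :=
    FL_meas g hg _ _ _ (by fun_prop) (by fun_prop) (by fun_prop)
  have key : ∀ u : En n, ∫⁻ θ : Fin 2 → En n,
      FL g (-grd Φ j θ) (θ j) u ^ 2 ≤
      ENNReal.ofReal c⁻¹ * (ENNReal.ofReal ((2 * Real.pi) ^ n) * (volume (Kb n) * ∫⁻ s, ‖g s‖ₑ ^ 2)) := by
    intro u
    rw [lintegral_pr j _ ((FL_meas g hg _ _ _ (by fun_prop) (by fun_prop) (by fun_prop)).pow_const 2)]
    simp only [pr_self]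
    have s1 : ∀ η : En n, ∫⁻ z, FL g (-grd Φ j (pr j η z)) (η) u ^ 2 ≤
        ENNReal.ofReal c⁻¹ * (ENNReal.ofReal ((2 * Real.pi) ^ n) * ∫⁻ s, (Kb n).indicator (fun s => ‖g (η + s)‖ₑ ^ 2) s) := by
      intro η
      refine (change_var Φ hΦ hb c hc hdet j η
        (fun q => FL g (-q) (η) u ^ 2)).trans ?_
      refine mul_le_mul_right ?_ _
      rw [lintegral_neg_eq_self (μ := (volume : Measure (En n))) (fun q => FL g q (η) u ^ 2)]
      exact FL_le g hgi η u
    refine (lintegral_mono s1).trans ?_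
    have hmm : Measurable fun p : En n × En n => (Kb n).indicator (fun s => ‖g (p.1 + s)‖ₑ ^ 2) p.2 := by
      have h : Measurable fun p : En n × En n => (univ ×ˢ Kb n).indicator (fun p : En n × En n => ‖g (p.1 + p.2)‖ₑ ^ 2) p :=
        Measurable.indicator ((hg.comp (by fun_prop)).enorm.pow_const 2) (MeasurableSet.univ.prod hK)
      refine Eq.mp (congrArg Measurable ?_) h
      funext p
      simp [indicator]
    rw [lintegral_const_mul _ (hmm.lintegral_prod_right'.const_mul _), lintegral_const_mul _ hmm.lintegral_prod_right']
    refine mul_le_mul_right (mul_le_mul_right (le_of_eq ?_) _) _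
    rw [lintegral_lintegral_swap hmm.aemeasurable]
    have : ∀ s : En n, ∫⁻ η, (Kb n).indicator (fun s => ‖g (η + s)‖ₑ ^ 2) s = (Kb n).indicator (fun _ => ∫⁻ s, ‖g s‖ₑ ^ 2) s := by
      intro s
      by_cases hs : s ∈ Kb n
      · simp only [indicator_of_mem hs]
        exact lintegral_add_right_eq_self (μ := (volume : Measure (En n))) (fun x => ‖g x‖ₑ ^ 2) s
      · simp [indicator_of_notMem hs]
    simp only [this]
    rw [lintegral_indicator_const hK, mul_comm]
  calc ∫⁻ θ : Fin 2 → En n, Aj r g (-grd Φ j θ) (θ j) ^ 2 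
      ≤ ∫⁻ θ : Fin 2 → En n, V * ∫⁻ u, nu r u * FL g (-grd Φ j θ) (θ j) u ^ 2 :=
        lintegral_mono fun θ => Aj_sq r g hg _ _
    _ = V * ∫⁻ u, nu r u * ∫⁻ θ : Fin 2 → En n, FL g (-grd Φ j θ) (θ j) u ^ 2 := by
        have hm4 : Measurable fun z : (Fin 2 → En n) × En n => nu r z.2 * 
          FL g (-grd Φ j z.1) (z.1 j) z.2 ^ 2 :=
          ((nu_measurable r).comp measurable_snd).mul (hm3.pow_const 2)
        rw [lintegral_const_mul _ hm4.lintegral_prod_right', lintegral_lintegral_swap hm4.aemeasurable]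
        congr 1
        refine lintegral_congr fun u => ?_
        dsimp only
        rw [lintegral_const_mul]
        exact ((FL_meas g hg _ _ _ (by fun_prop) (by fun_prop) (by fun_prop)).pow_const 2)
    _ ≤ V * ∫⁻ u, nu r u * (ENNReal.ofReal c⁻¹ * (ENNReal.ofReal ((2 * Real.pi) ^ n) * (volume (Kb n) * ∫⁻ s, ‖g s‖ₑ ^ 2))) :=
        mul_le_mul_right (lintegral_mono fun u => mul_le_mul_right (key u) _) _
    _ = _ := by rw [lintegral_mul_const _ (nu_measurable r)]

/-- Bilinear form estimate. -/
theorem bil_est {n : ℕ} (Φ : (Fin 2 → En n) → ℝ) (hΦ : ContDiff ℝ (⊤ : ℕ∞) Φ)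
    (hb : ∀ l : List (Fin 2 × Fin n), 2 ≤ l.length → ∃ C, ∀ U, |dirD (l.map ev) Φ U| ≤ C)
    (c : ℝ) (hc : 0 < c)
    (hdet : ∀ U, c ≤ |(Matrix.of fun a b : Fin n => dirD [ev (0, a), ev (1, b)] Φ U).det|) :
    ∃ C : ℝ≥0∞, C ≠ ⊤ ∧ ∀ g : Fin 2 → En n → ℂ, (∀ j, Measurable (g j)) → (∀ j, Integrable (g j)) →
      ‖∫ U, Complex.exp (Complex.I * Complex.ofReal (Φ U)) * ∏ j, g j (U j)‖ₑ ^ 2 ≤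
        C * ∏ j, ∫⁻ s, ‖g j s‖ₑ ^ 2 := by
  obtain ⟨B, hB⟩ := local_est Φ hΦ hb
  set r : ℝ := -1 + (-1) / ((2 * n : ℕ) + 1) with hr
  have hr1 : r < -1 := by
    have : (0 : ℝ) < ((2 * n : ℕ) + 1) := by positivity
    have h2 : (-1 : ℝ) / ((2 * n : ℕ) + 1) < 0 := div_neg_of_neg_of_pos (by norm_num) this
    linarith
  set V := ∫⁻ u : En n, nu r u with hV
  have hVt : V ≠ ⊤ := (lintegral_nu_lt r hr1).ne
  have hKt : volume (Kb n) ≠ ⊤ := (isCompact_closedBall (0 : En n) 2).measure_lt_top.ne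
  set D : ℝ≥0∞ := V * (V * (ENNReal.ofReal c⁻¹ * (ENNReal.ofReal ((2 * Real.pi) ^ n) * volume (Kb n)))) with hD
  have hDt : D ≠ ⊤ := by
    rw [hD]
    exact ENNReal.mul_ne_top hVt (ENNReal.mul_ne_top hVt (ENNReal.mul_ne_top ENNReal.ofReal_ne_top
      (ENNReal.mul_ne_top ENNReal.ofReal_ne_top hKt)))
  refine ⟨ENNReal.ofReal B ^ 2 * (D * D), ENNReal.mul_ne_top (ENNReal.pow_ne_top ENNReal.ofReal_ne_top) (ENNReal.mul_ne_top hDt hDt), ?_⟩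
  intro g hgm hgi
  have hF : Integrable fun U : Fin 2 → En n => Complex.exp (Complex.I * Complex.ofReal (Φ U)) * ∏ j, g j (U j) := by
    have h1 : Integrable fun U : Fin 2 → En n => ∏ j, g j (U j) := Integrable.fintype_prod (μ := fun _ => volume) hgi
    refine h1.bdd_mul (c := 1) ?_ ?_
    · have := hΦ.continuous
      exact Continuous.aestronglyMeasurable (by fun_prop)
    · refine Eventually.of_forall fun s => ?_
      rw [mul_comm, Complex.norm_exp_ofReal_mul_I]
  have h1 : ‖∫ U, Complex.exp (Complex.I * Complex.ofReal (Φ U)) * ∏ j, g j (U j)‖ₑ ≤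
      ENNReal.ofReal B * ∫⁻ θ : Fin 2 → En n, Aj r (g 0) (-grd Φ 0 θ) (θ 0) * Aj r (g 1) (-grd Φ 1 θ) (θ 1) := by
    refine (average _ hF).trans ?_
    rw [← lintegral_const_mul (ENNReal.ofReal B) (f := fun θ => Aj r (g 0) (-grd Φ 0 θ) (θ 0) * Aj r (g 1) (-grd Φ 1 θ) (θ 1))
      ((Aj_meas Φ hΦ 0 r _ (hgm 0)).mul (Aj_meas Φ hΦ 1 r _ (hgm 1)))]
    refine lintegral_mono fun θ => ?_
    have := hB θ g hgi
    rw [Fin.prod_univ_two] at this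
    exact this
  refine (pow_le_pow_left₀ (zero_le) h1 2).trans ?_
  rw [mul_pow, mul_assoc]
  refine mul_le_mul_right ?_ _
  refine (lcs _ _ _ (Aj_meas Φ hΦ 0 r _ (hgm 0)) (Aj_meas Φ hΦ 1 r _ (hgm 1))).trans ?_
  have e : ∀ j, ∫⁻ θ : Fin 2 → En n, Aj r (g j) (-grd Φ j θ) (θ j) ^ 2 ≤ D * ∫⁻ s, ‖g j s‖ₑ ^ 2 := by
    intro j
    refine (Aj_L2 Φ hΦ hb c hc hdet j r (g j) (hgm j) (hgi j)).trans (le_of_eq ?_)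
    rw [hD]
    simp only [mul_assoc]
    rfl
  refine (mul_le_mul' (e 0) (e 1)).trans (le_of_eq ?_)
  rw [Fin.prod_univ_two]
  ring

end Core

section CoreT
open Set Filter Topology

/-- The basic oscillatory operator. -/
def Tg {n : ℕ} (φ : En n → En n → ℝ) (g : En n → ℂ) (x : En n) : ℂ :=
  ∫ ξ, Complex.exp (Complex.I * Complex.ofReal (φ x ξ)) * g ξ

theorem norm_cexp_I (t : ℝ) : ‖Complex.exp (Complex.I * Complex.ofReal t)‖ = 1 := by
  rw [mul_comm, Complex.norm_exp_ofReal_mul_I]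

theorem Tg_continuous {n : ℕ} (φ : En n → En n → ℝ) (hφ : Continuous fun w : En n × En n => φ w.1 w.2)
    (g : En n → ℂ) (hgi : Integrable g) : Continuous (Tg φ g) := by
  refine continuous_of_dominated (bound := fun ξ => ‖g ξ‖) ?_ ?_ hgi.norm ?_
  · intro x
    refine AEStronglyMeasurable.mul ?_ hgi.1
    have : Continuous fun ξ => φ x ξ := hφ.comp (by fun_prop : Continuous fun ξ => (x, ξ))
    exact Continuous.aestronglyMeasurable (by fun_prop)
  · intro x
    refine Eventually.of_forall fun ξ => ?_
    rw [norm_mul, norm_cexp_I, one_mul]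
  · refine Eventually.of_forall fun ξ => ?_
    have : Continuous fun x => φ x ξ := hφ.comp (by fun_prop : Continuous fun x => (x, ξ))
    fun_prop

theorem core_L2 {n : ℕ} (φ : En n → En n → ℝ) (hφ : Continuous fun w : En n × En n => φ w.1 w.2)
    (hΦ : ContDiff ℝ (⊤ : ℕ∞) (fun U : Fin 2 → En n => φ (U 0) (U 1)))
    (hb : ∀ l : List (Fin 2 × Fin n), 2 ≤ l.length → ∃ C, ∀ U, |dirD (l.map ev) (fun U : Fin 2 → En n => φ (U 0) (U 1)) U| ≤ C)
    (c : ℝ) (hc : 0 < c)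
    (hdet : ∀ U, c ≤ |(Matrix.of fun a b : Fin n => dirD [ev (0, a), ev (1, b)] (fun U : Fin 2 → En n => φ (U 0) (U 1)) U).det|) :
    ∃ C : ℝ≥0∞, C ≠ ⊤ ∧ ∀ g : En n → ℂ, Measurable g → Integrable g →
      ∫⁻ x, ‖Tg φ g x‖ₑ ^ 2 ≤ C * ∫⁻ s, ‖g s‖ₑ ^ 2 := by
  obtain ⟨C, hC, hest⟩ := bil_est _ hΦ hb c hc hdet
  refine ⟨C, hC, fun g hgm hgi => ?_⟩
  have hTc := Tg_continuous φ hφ g hgi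
  have hR : ∀ R : ℝ, ∫⁻ x in Metric.closedBall (0 : En n) R, ‖Tg φ g x‖ₑ ^ 2 ≤ C * ∫⁻ s, ‖g s‖ₑ ^ 2 := by
    intro R
    set Bs := Metric.closedBall (0 : En n) R with hBs
    have hBm : MeasurableSet Bs := Metric.isClosed_closedBall.measurableSet
    have hBc : IsCompact Bs := isCompact_closedBall _ _
    set h : En n → ℂ := Bs.indicator fun x => (starRingEnd ℂ) (Tg φ g x) with hh
    have hcc : Continuous fun x => (starRingEnd ℂ) (Tg φ g x) := Complex.continuous_conj.comp hTc
    have hhm : Measurable h := hcc.measurable.indicator hBm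
    have hhi : Integrable h := by
      rw [hh, integrable_indicator_iff hBm]
      exact hcc.continuousOn.integrableOn_compact hBc
    have h1 := hest ![h, g] (by intro j; fin_cases j <;> simpa) (by intro j; fin_cases j <;> simpa)
    have e1 : ∫ U : Fin 2 → En n, Complex.exp (Complex.I * Complex.ofReal (φ (U 0) (U 1))) * ∏ j, (![h, g] : Fin 2 → En n → ℂ) j (U j) =
        ∫ x, h x * Tg φ g x := by
      have hp := (volume_preserving_piFinTwo (fun _ : Fin 2 => En n))
      have hi : Integrable (fun p : En n × En n => Complex.exp (Complex.I * Complex.ofReal (φ p.1 p.2)) * (h p.1 * g p.2))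
          ((volume : Measure (En n)).prod volume) := by
        refine (hhi.mul_prod hgi).bdd_mul (c := 1) ?_ ?_
        · exact Continuous.aestronglyMeasurable (by fun_prop)
        · exact Eventually.of_forall fun p => (norm_cexp_I _).le
      have e2 := hp.integral_comp (MeasurableEquiv.measurableEmbedding _)
        (fun p : En n × En n => Complex.exp (Complex.I * Complex.ofReal (φ p.1 p.2)) * (h p.1 * g p.2))
      have e3 := integral_prod _ hi
      simp only [Fin.prod_univ_two]
      refine Eq.trans e2 (Eq.trans e3 ?_)
      refine integral_congr_ae (Eventually.of_forall fun x => ?_)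
      simp only [Tg]
      rw [← integral_const_mul]
      congr 1
      funext ξ
      ring
    have e4 : ∫ x, h x * Tg φ g x = ((∫ x in Bs, ‖Tg φ g x‖ ^ 2 : ℝ) : ℂ) := by
      rw [← integral_complex_ofReal, ← integral_indicator hBm]
      congr 1
      funext x
      simp only [hh, indicator]
      split_ifs
      · rw [← Complex.normSq_eq_conj_mul_self, Complex.normSq_eq_norm_sq]
      · simp
    have hLi : IntegrableOn (fun x => ‖Tg φ g x‖ ^ 2) Bs :=
      (hTc.norm.pow 2).continuousOn.integrableOn_compact hBc
    have e6 : ∀ x, ENNReal.ofReal (‖Tg φ g x‖ ^ 2) = ‖Tg φ g x‖ₑ ^ 2 := by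
      intro x
      rw [ENNReal.ofReal_pow (norm_nonneg _), ofReal_norm]
    have e5 : ‖((∫ x in Bs, ‖Tg φ g x‖ ^ 2 : ℝ) : ℂ)‖ₑ = ∫⁻ x in Bs, ‖Tg φ g x‖ₑ ^ 2 := by
      rw [← ofReal_norm, Complex.norm_real, Real.norm_of_nonneg (integral_nonneg fun x => by positivity),
        ofReal_integral_eq_lintegral_ofReal hLi (Eventually.of_forall fun x => by positivity)]
      simp only [e6]
    have e7 : ∫⁻ s, ‖h s‖ₑ ^ 2 = ∫⁻ x in Bs, ‖Tg φ g x‖ₑ ^ 2 := by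
      rw [← lintegral_indicator hBm]
      refine lintegral_congr fun x => ?_
      simp only [hh, indicator]
      split_ifs
      · rw [← ofReal_norm, RCLike.norm_conj, ofReal_norm]
      · simp
    rw [e1, e4, e5, Fin.prod_univ_two] at h1
    simp only [Matrix.cons_val_zero, Matrix.cons_val_one, e7] at h1
    set L := ∫⁻ x in Bs, ‖Tg φ g x‖ₑ ^ 2 with hL
    have hLt : L ≠ ⊤ := by rw [← e5]; exact enorm_ne_top
    rcases eq_or_ne L 0 with h0 | h0
    · rw [h0]; exact zero_le
    · have : L * L ≤ L * (C * ∫⁻ s, ‖g s‖ₑ ^ 2) := by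
        calc L * L = L ^ 2 := by ring
          _ ≤ _ := h1
          _ = _ := by ring
      exact (ENNReal.mul_le_mul_iff_right h0 hLt).1 this
  have hcov : AECover (volume : Measure (En n)) atTop fun k : ℕ => Metric.closedBall (0 : En n) (k : ℝ) :=
    aecover_closedBall tendsto_natCast_atTop_atTop
  have ht := hcov.lintegral_tendsto_of_countably_generated (f := fun x => ‖Tg φ g x‖ₑ ^ 2)
    (hTc.measurable.enorm.pow_const 2).aemeasurable
  exact le_of_tendsto ht (Eventually.of_forall fun k => hR k)

/-- The core bound under the frozen hypotheses. -/
theorem core_frozen {n : ℕ} (φ : En n → En n → ℝ)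
    (hφ : ContDiff ℝ (⊤ : ℕ∞) (fun w : En n × En n => φ w.1 w.2))
    (hsnd : ∃ c : ℝ, 0 < c ∧ ∀ x ξ : En n, c ≤ |(mixHess φ x ξ).det|)
    (hbd : ∀ (α β : Fin n → ℕ), 2 ≤ mdeg α + mdeg β →
      ∃ C : ℝ, ∀ x ξ : En n, |mixedD β α φ x ξ| ≤ C) :
    ∃ C : ℝ≥0∞, C ≠ ⊤ ∧ ∀ g : En n → ℂ, Measurable g → Integrable g →
      ∫⁻ x, ‖Tg φ g x‖ₑ ^ 2 ≤ C * ∫⁻ s, ‖g s‖ₑ ^ 2 := by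
  obtain ⟨c, hc, hdet⟩ := hsnd
  have hΦ : ContDiff ℝ (⊤ : ℕ∞) (fun U : Fin 2 → En n => φ (U 0) (U 1)) :=
    hφ.comp ((contDiff_apply ℝ (En n) (0 : Fin 2)).prodMk (contDiff_apply ℝ (En n) (1 : Fin 2)))
  refine core_L2 φ hφ.continuous hΦ ?_ c hc ?_
  · intro l hl
    obtain ⟨C, hC⟩ := hbd (fun i => l.count (0, i)) (fun i => l.count (1, i)) (by
      have := sum_count l
      rw [Fin.sum_univ_two] at this
      omega)
    refine ⟨C, fun U => ?_⟩
    rw [mixedD_eq φ hΦ l U]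
    exact hC _ _
  · intro U
    convert hdet (U 0) (U 1) using 4
    ext a b
    have s1 := dirD_single (0 : Fin 2) [eb a] _ (contDiff_dirD [ev (1, b)] _ hΦ) U
    have s2 : ∀ W, _ := fun W => dirD_single (1 : Fin 2) [eb b] _ hΦ W
    have s3 : dirD [ev (0, a), ev (1, b)] (fun U : Fin 2 → En n => φ (U 0) (U 1)) U =
        dirD [eb a] (fun y => dirD [ev (1, b)] (fun U : Fin 2 → En n => φ (U 0) (U 1)) (Function.update U 0 y)) (U 0) := s1
    have s4 : ∀ W, dirD [ev (1, b)] (fun U : Fin 2 → En n => φ (U 0) (U 1)) W =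
        dirD [eb b] (fun y => (fun U : Fin 2 → En n => φ (U 0) (U 1)) (Function.update W 1 y)) (W 1) := s2
    change dirD [ev (0, a), ev (1, b)] (fun U : Fin 2 → En n => φ (U 0) (U 1)) U = _
    rw [s3]
    simp only [s4]
    simp [mixHess, dirD_cons, pd, eb]

end CoreT

section Fin
open Set Filter Topology FourierTransform

/-- Truncated operator size. -/
def TL {n : ℕ} (φ : En n → En n → ℝ) (G : En n → ℂ) (x u : En n) : ℝ≥0∞ :=
  ‖Tg φ ((low u).indicator G) x‖ₑ

theorem TL_meas {n : ℕ} (φ : En n → En n → ℝ) (hφ : Continuous fun w : En n × En n => φ w.1 w.2)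
    (G : En n → ℂ) (hG : Measurable G) : Measurable fun p : En n × En n => TL φ G p.1 p.2 := by
  have hset : MeasurableSet {z : (En n × En n) × En n | z.2 ∈ low z.1.2} :=
    low_measurable2.preimage (show Measurable fun z : (En n × En n) × En n => (z.1.2, z.2) by fun_prop)
  have h1 : Measurable fun z : (En n × En n) × En n =>
      {z : (En n × En n) × En n | z.2 ∈ low z.1.2}.indicator
        (fun z => Complex.exp (Complex.I * Complex.ofReal (φ z.1.1 z.2)) * G z.2) z := by
    refine Measurable.indicator ?_ hset
    refine Measurable.mul ?_ (hG.comp (by fun_prop))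
    have : Continuous fun z : (En n × En n) × En n => φ z.1.1 z.2 :=
      hφ.comp (by fun_prop : Continuous fun z : (En n × En n) × En n => (z.1.1, z.2))
    exact Continuous.measurable (by fun_prop)
  have h2 := (h1.stronglyMeasurable.integral_prod_right' (ν := (volume : Measure (En n)))).measurable.enorm
  refine Eq.mp (congrArg Measurable ?_) h2
  funext p
  unfold TL Tg
  congr 2
  funext s
  simp only [indicator]
  by_cases h1 : s ∈ low p.2 <;> simp [h1]

/-- Square function-like majorant. -/
def Sj {n : ℕ} (r : ℝ) (φ : En n → En n → ℝ) (G : En n → ℂ) (x : En n) : ℝ≥0∞ :=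
  ∫⁻ u, nu r u * TL φ G x u

theorem Sj_meas {n : ℕ} (r : ℝ) (φ : En n → En n → ℝ) (hφ : Continuous fun w : En n × En n => φ w.1 w.2)
    (G : En n → ℂ) (hG : Measurable G) : Measurable (Sj r φ G) := by
  refine Measurable.lintegral_prod_right' (f := fun z : En n × En n => nu r z.2 * TL φ G z.1 z.2) ?_
  exact ((nu_measurable r).comp measurable_snd).mul (TL_meas φ hφ G hG)

theorem TL_meas1 {n : ℕ} (φ : En n → En n → ℝ) (hφ : Continuous fun w : En n × En n => φ w.1 w.2)
    (G : En n → ℂ) (hG : Measurable G) (x : En n) : Measurable fun u => TL φ G x u := by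
  have h := TL_meas φ hφ G hG
  generalize TL φ G = F at h ⊢
  exact h.comp (measurable_const.prodMk measurable_id)

theorem TL_meas2 {n : ℕ} (φ : En n → En n → ℝ) (hφ : Continuous fun w : En n × En n => φ w.1 w.2)
    (G : En n → ℂ) (hG : Measurable G) (u : En n) : Measurable fun x => TL φ G x u := by
  have h := TL_meas φ hφ G hG
  generalize TL φ G = F at h ⊢
  exact h.comp (measurable_id.prodMk measurable_const)

theorem Sj_L2 {n : ℕ} (r : ℝ) (φ : En n → En n → ℝ) (hφ : Continuous fun w : En n × En n => φ w.1 w.2)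
    (C : ℝ≥0∞) (hC : ∀ g : En n → ℂ, Measurable g → Integrable g →
      ∫⁻ x, ‖Tg φ g x‖ₑ ^ 2 ≤ C * ∫⁻ s, ‖g s‖ₑ ^ 2)
    (G : En n → ℂ) (hG : Measurable G) (hGi : Integrable G) :
    ∫⁻ x, Sj r φ G x ^ 2 ≤ (∫⁻ u : En n, nu r u) * ((∫⁻ u : En n, nu r u) * (C * ∫⁻ s, ‖G s‖ₑ ^ 2)) := by
  set V := ∫⁻ u : En n, nu r u with hV
  have hm := TL_meas φ hφ G hG
  have key : ∀ u, ∫⁻ x, TL φ G x u ^ 2 ≤ C * ∫⁻ s, ‖G s‖ₑ ^ 2 := by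
    intro u
    refine (hC _ (hG.indicator (low_measurable u)) (hGi.indicator (low_measurable u))).trans ?_
    refine mul_le_mul_right (lintegral_mono fun s => ?_) _
    simp only [indicator]
    split_ifs <;> simp
  calc ∫⁻ x, Sj r φ G x ^ 2 ≤ ∫⁻ x, V * ∫⁻ u, nu r u * TL φ G x u ^ 2 :=
        lintegral_mono fun x => wcs _ _ _ (nu_measurable r) (TL_meas1 φ hφ G hG x)
    _ = V * ∫⁻ u, nu r u * ∫⁻ x, TL φ G x u ^ 2 := by
        have hm4 : Measurable fun z : En n × En n => nu r z.2 * TL φ G z.1 z.2 ^ 2 :=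
          ((nu_measurable r).comp measurable_snd).mul (hm.pow_const 2)
        rw [lintegral_const_mul _ hm4.lintegral_prod_right', lintegral_lintegral_swap hm4.aemeasurable]
        congr 1
        refine lintegral_congr fun u => ?_
        dsimp only
        rw [lintegral_const_mul]
        exact (TL_meas2 φ hφ G hG u).pow_const 2
    _ ≤ V * ∫⁻ u, nu r u * (C * ∫⁻ s, ‖G s‖ₑ ^ 2) :=
        mul_le_mul_right (lintegral_mono fun u => mul_le_mul_right (key u) _) _
    _ = _ := by rw [lintegral_mul_const _ (nu_measurable r)]

theorem ft_schwartz {n : ℕ} (f : 𝓢(En n, ℂ)) : Continuous (ft ⇑f) ∧ Integrable (ft ⇑f) := by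
  have e : ft ⇑f = fun q => (𝓕 f : 𝓢(En n, ℂ)) ((2 * Real.pi)⁻¹ • q) := by
    funext q
    rw [ft_eq_fourier, SchwartzMap.fourier_coe]
  rw [e]
  refine ⟨by fun_prop, ?_⟩
  exact (𝓕 f : 𝓢(En n, ℂ)).integrable.comp_smul (by positivity)

/-- Almost everywhere uniform symbol bounds. -/
theorem amp_bound {n N : ℕ} (m : ℝ) (a : En n → (Fin N → En n) → ℂ) (ha : LpSmN ⊤ m 1 a) :
    ∃ B : ℝ, ∀ᵐ x, ∀ k ≤ N * n, ∀ U, ‖dirD ((lc N n k).map ev) (a x) U‖ ≤ B * (1 + ∑ j, ‖U j‖) ^ (m - k) := by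
  obtain ⟨hs, hmeas, hbd⟩ := ha
  have h1 : ∀ k : ℕ, ∃ C : ℝ, k ≤ N * n → ∀ U, ∀ᵐ x, ‖dirD ((lc N n k).map ev) (a x) U‖ ≤ |C| * (1 + ∑ j, ‖U j‖) ^ (m - k) := by
    intro k
    obtain ⟨C, hC⟩ := hbd (fun j i => (lc N n k).count (j, i))
    refine ⟨C, fun hk U => ?_⟩
    have h2 := hC U
    have e : m - 1 * ∑ j, (mdeg (fun i => (lc N n k).count (j, i)) : ℝ) = m - k := by
      have := sum_count (lc N n k)
      rw [lc_length N n k hk] at this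
      rw [one_mul]
      congr 1
      exact_mod_cast this
    rw [e, eLpNorm_exponent_top] at h2
    have h3 := ae_le_eLpNormEssSup (f := fun x => mderivN (fun j i => (lc N n k).count (j, i)) (a x) U) (μ := volume)
    filter_upwards [h3] with x hx
    rw [dirD_ev_eq_mderivN _ _ (hs x)]
    have h4 := hx.trans h2
    have hp : 0 ≤ (1 + ∑ j, ‖U j‖) ^ (m - k) := by positivity
    have h5 : ‖mderivN (fun j i => (lc N n k).count (j, i)) (a x) U‖ₑ ≤ ENNReal.ofReal (|C| * (1 + ∑ j, ‖U j‖) ^ (m - k)) :=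
      h4.trans (ENNReal.ofReal_le_ofReal (mul_le_mul_of_nonneg_right (le_abs_self C) hp))
    rw [← ofReal_norm] at h5
    exact (ENNReal.ofReal_le_ofReal_iff (by positivity)).1 h5
  choose C hC using h1
  set B := ∑ k ∈ Finset.range (N * n + 1), |C k| with hB
  refine ⟨B, ?_⟩
  rw [ae_all_iff]
  intro k
  by_cases hk : k ≤ N * n
  swap
  · exact Eventually.of_forall fun x h => absurd h hk
  have hd : ∀ᵐ x, ∀ i : ℕ, ‖dirD ((lc N n k).map ev) (a x) (TopologicalSpace.denseSeq (Fin N → En n) i)‖ ≤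
      |C k| * (1 + ∑ j, ‖TopologicalSpace.denseSeq (Fin N → En n) i j‖) ^ (m - k) := by
    rw [ae_all_iff]
    intro i
    exact hC k hk _
  filter_upwards [hd] with x hx _ U
  have hcl : IsClosed {U : Fin N → En n | ‖dirD ((lc N n k).map ev) (a x) U‖ ≤ |C k| * (1 + ∑ j, ‖U j‖) ^ (m - k)} := by
    refine isClosed_le (contDiff_dirD _ _ (hs x)).continuous.norm ?_
    refine continuous_const.mul (Continuous.rpow_const (by fun_prop) fun U => Or.inl ?_)
    positivity
  have hU : U ∈ {U : Fin N → En n | ‖dirD ((lc N n k).map ev) (a x) U‖ ≤ |C k| * (1 + ∑ j, ‖U j‖) ^ (m - k)} := by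
    have := (TopologicalSpace.denseRange_denseSeq (Fin N → En n)).closure_range
    have h2 : closure (range (TopologicalSpace.denseSeq (Fin N → En n))) ⊆ _ := 
      closure_minimal (range_subset_iff.2 hx) hcl
    rw [this] at h2
    exact h2 (mem_univ U)
  refine hU.trans ?_
  refine mul_le_mul_of_nonneg_right ?_ (by positivity)
  exact Finset.single_le_sum (f := fun k => |C k|) (fun _ _ => abs_nonneg _) (Finset.mem_range.2 (by omega))

/-- Pointwise bound of the multilinear operator. -/
theorem mfio_le {n N : ℕ} (m : ℝ) (hm : m < 0) (a : En n → (Fin N → En n) → ℂ) (hs : ∀ x, ContDiff ℝ (⊤ : ℕ∞) (a x))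
    (φ : Fin N → En n → En n → ℝ) (hφ : ∀ j, Continuous fun w : En n × En n => φ j w.1 w.2)
    (B : ℝ) (x : En n)
    (hB : ∀ k ≤ N * n, ∀ U, ‖dirD ((lc N n k).map ev) (a x) U‖ ≤ B * (1 + ∑ j, ‖U j‖) ^ (m - k))
    (f : Fin N → En n → ℂ) (hf : ∀ j, Integrable (ft (f j))) :
    ‖mfio a φ f x‖ₑ ≤ ENNReal.ofReal B * ∏ j, Sj (-1 + m / ((N * n : ℕ) + 1)) (φ j) (ft (f j)) x := by
  have hgi : ∀ j, Integrable fun ξ => Complex.exp (Complex.I * Complex.ofReal (φ j x ξ)) * ft (f j) ξ := by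
    intro j
    refine (hf j).bdd_mul (c := 1) ?_ ?_
    · have : Continuous fun ξ => φ j x ξ := (hφ j).comp (by fun_prop : Continuous fun ξ => (x, ξ))
      exact Continuous.aestronglyMeasurable (by fun_prop)
    · exact Eventually.of_forall fun p => (norm_cexp_I _).le
  have h := sep m hm (a x) (hs x) B hB _ hgi
  have e1 : mfio a φ f x = ∫ U, a x U * ∏ j, (Complex.exp (Complex.I * Complex.ofReal (φ j x (U j))) * ft (f j) (U j)) := by
    unfold mfio
    congr 1
    funext U
    rw [Finset.prod_mul_distrib, ← Complex.exp_sum]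
    push_cast
    rw [Finset.mul_sum, mul_assoc]
  rw [e1]
  refine h.trans (le_of_eq ?_)
  congr 1
  refine Finset.prod_congr rfl fun j _ => ?_
  unfold Sj TL Tg
  refine lintegral_congr fun u => ?_
  congr 3
  funext s
  simp only [indicator]
  split_ifs <;> simp

end Fin

/-- Theorem 5.12, second part: `L²×⋯×L² → L^{2/N}` boundedness of
multilinear FIOs with inhomogeneous phases. -/
theorem statement12 {n : ℕ} (N : ℕ) (hN : 2 ≤ N) (m : ℝ) (hm : m < 0)
    (a : En n → (Fin N → En n) → ℂ) (ha : LpSmN ⊤ m 1 a)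
    (φ : Fin N → En n → En n → ℝ)
    (hφ : ∀ j, ContDiff ℝ (⊤ : ℕ∞) (fun w : En n × En n => φ j w.1 w.2))
    (hsnd : ∀ j, ∃ c : ℝ, 0 < c ∧ ∀ x ξ : En n, c ≤ |(mixHess (φ j) x ξ).det|)
    (hbd : ∀ j (α β : Fin n → ℕ), 2 ≤ mdeg α + mdeg β →
      ∃ C : ℝ, ∀ x ξ : En n, |mixedD β α (φ j) x ξ| ≤ C) :
    ∃ C : ℝ, 0 < C ∧ ∀ f : Fin N → 𝓢(En n, ℂ),
      eLpNorm (mfio a φ (fun j => ⇑(f j))) ((2 : ℝ≥0∞) / (N : ℝ≥0∞)) volume ≤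
        ENNReal.ofReal C * ∏ j, eLpNorm (⇑(f j)) 2 volume := by
  obtain ⟨B, hB⟩ := amp_bound m a ha
  choose C hCt hC using fun j => core_frozen (φ j) (hφ j) (hsnd j) (hbd j)
  set r : ℝ := -1 + m / ((N * n : ℕ) + 1) with hr
  have hr1 : r < -1 := by
    have : (0 : ℝ) < ((N * n : ℕ) + 1) := by positivity
    have h2 : m / ((N * n : ℕ) + 1) < 0 := div_neg_of_neg_of_pos hm this
    linarith
  set V := ∫⁻ u : En n, nu r u with hV
  have hVt : V ≠ ⊤ := (lintegral_nu_lt r hr1).ne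
  set D : Fin N → ℝ≥0∞ := fun j => V * (V * (C j * ENNReal.ofReal ((2 * Real.pi) ^ n))) with hD
  have hDt : ∀ j, D j ≠ ⊤ := fun j =>
    ENNReal.mul_ne_top hVt (ENNReal.mul_ne_top hVt (ENNReal.mul_ne_top (hCt j) ENNReal.ofReal_ne_top))
  set K : ℝ≥0∞ := ENNReal.ofReal B * ∏ j, D j ^ (1 / 2 : ℝ) with hK
  have hKt : K ≠ ⊤ := ENNReal.mul_ne_top ENNReal.ofReal_ne_top
    (ENNReal.prod_ne_top fun j _ => ENNReal.rpow_ne_top_of_nonneg (by norm_num) (hDt j))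
  refine ⟨K.toReal + 1, by positivity, fun f => ?_⟩
  have hKle : K ≤ ENNReal.ofReal (K.toReal + 1) := by
    calc K = ENNReal.ofReal K.toReal := (ENNReal.ofReal_toReal hKt).symm
      _ ≤ _ := ENNReal.ofReal_le_ofReal (by linarith)
  refine le_trans ?_ (mul_le_mul_left hKle _)
  set S : Fin N → En n → ℝ≥0∞ := fun j => Sj r (φ j) (ft (f j)) with hS
  have hSm : ∀ j, Measurable (S j) := fun j =>
    Sj_meas r (φ j) (hφ j).continuous _ (ft_schwartz (f j)).1.measurable
  have hS2 : ∀ j, ∫⁻ x, S j x ^ 2 ≤ D j * ∫⁻ x, ‖f j x‖ₑ ^ 2 := by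
    intro j
    refine (Sj_L2 r (φ j) (hφ j).continuous (C j) (hC j) _ (ft_schwartz (f j)).1.measurable (ft_schwartz (f j)).2).trans ?_
    have h1 := lintegral_ft_sq (⇑(f j)) (f j).integrable
    calc V * (V * (C j * ∫⁻ s, ‖ft (f j) s‖ₑ ^ 2)) ≤
        V * (V * (C j * (ENNReal.ofReal ((2 * Real.pi) ^ n) * ∫⁻ t, ‖f j t‖ₑ ^ 2))) :=
          mul_le_mul_right (mul_le_mul_right (mul_le_mul_right h1 _) _) _
      _ = _ := by simp only [hD, mul_assoc]
  have hN0 : (0 : ℝ) < N := by exact_mod_cast (by omega : 0 < N)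
  have hNe : (N : ℝ≥0∞) ≠ 0 := by exact_mod_cast (by omega : N ≠ 0)
  have hp0 : (2 : ℝ≥0∞) / (N : ℝ≥0∞) ≠ 0 := (ENNReal.div_pos (by norm_num) (ENNReal.natCast_ne_top N)).ne'
  have hpt : (2 : ℝ≥0∞) / (N : ℝ≥0∞) ≠ ⊤ := (ENNReal.div_lt_top (by norm_num) hNe).ne
  have hpr : ((2 : ℝ≥0∞) / (N : ℝ≥0∞)).toReal = 2 / N := by simp
  rw [eLpNorm_eq_lintegral_rpow_enorm_toReal hp0 hpt, hpr]
  have hpw : ∀ᵐ x, ‖mfio a φ (fun j => ⇑(f j)) x‖ₑ ≤ ENNReal.ofReal B * ∏ j, S j x := by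
    filter_upwards [hB] with x hx
    exact mfio_le m hm a ha.1 φ (fun j => (hφ j).continuous) B x hx _ (fun j => (ft_schwartz (f j)).2)
  have hp2 : (0 : ℝ) < 2 / N := by positivity
  have hn2 : ∀ j, eLpNorm (⇑(f j)) 2 volume = (∫⁻ x, ‖f j x‖ₑ ^ 2) ^ (1 / 2 : ℝ) := by
    intro j
    rw [eLpNorm_eq_lintegral_rpow_enorm_toReal (by norm_num) (by norm_num)]
    simp
  have hold : ∫⁻ x, ∏ j, S j x ^ (2 / N : ℝ) ≤ ∏ j, (∫⁻ x, S j x ^ 2) ^ (1 / N : ℝ) := by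
    have := ENNReal.lintegral_prod_norm_pow_le (μ := (volume : Measure (En n))) Finset.univ (f := fun j x => S j x ^ 2)
      (fun j _ => ((hSm j).pow_const 2).aemeasurable) (p := fun _ => (1 / N : ℝ)) (by simp; field_simp) (fun _ _ => by positivity)
    refine le_trans (le_of_eq ?_) this
    refine lintegral_congr fun x => Finset.prod_congr rfl fun j _ => ?_
    rw [← ENNReal.rpow_natCast, ← ENNReal.rpow_mul]
    congr 1
    push_cast
    ring
  calc (∫⁻ x, ‖mfio a φ (fun j => ⇑(f j)) x‖ₑ ^ (2 / N : ℝ)) ^ (1 / (2 / N : ℝ))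
      ≤ (∫⁻ x, ENNReal.ofReal B ^ (2 / N : ℝ) * ∏ j, S j x ^ (2 / N : ℝ)) ^ (1 / (2 / N : ℝ)) := by
        refine ENNReal.rpow_le_rpow (lintegral_mono_ae ?_) (by positivity)
        filter_upwards [hpw] with x hx
        refine (ENNReal.rpow_le_rpow hx hp2.le).trans (le_of_eq ?_)
        rw [ENNReal.mul_rpow_of_nonneg _ _ hp2.le, ENNReal.prod_rpow_of_nonneg hp2.le]
    _ = (ENNReal.ofReal B ^ (2 / N : ℝ) * ∫⁻ x, ∏ j, S j x ^ (2 / N : ℝ)) ^ (1 / (2 / N : ℝ)) := by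
        rw [lintegral_const_mul]
        exact Finset.measurable_fun_prod _ fun j _ => (hSm j).pow_const _
    _ ≤ (ENNReal.ofReal B ^ (2 / N : ℝ) * ∏ j, (∫⁻ x, S j x ^ 2) ^ (1 / N : ℝ)) ^ (1 / (2 / N : ℝ)) :=
        ENNReal.rpow_le_rpow (mul_le_mul_right hold _) (by positivity)
    _ = ENNReal.ofReal B * ∏ j, (∫⁻ x, S j x ^ 2) ^ (1 / 2 : ℝ) := by
        have hq : (0 : ℝ) ≤ 1 / (2 / N) := by positivity
        rw [ENNReal.mul_rpow_of_nonneg _ _ hq, ← ENNReal.prod_rpow_of_nonneg hq, ← ENNReal.rpow_mul]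
        congr 1
        · rw [mul_one_div_cancel hp2.ne', ENNReal.rpow_one]
        · refine Finset.prod_congr rfl fun j _ => ?_
          rw [← ENNReal.rpow_mul]
          congr 1
          field_simp
    _ ≤ ENNReal.ofReal B * ∏ j, (D j * ∫⁻ x, ‖f j x‖ₑ ^ 2) ^ (1 / 2 : ℝ) :=
        mul_le_mul_right (Finset.prod_le_prod' fun j _ => ENNReal.rpow_le_rpow (hS2 j) (by norm_num)) _
    _ = _ := by
        rw [hK, mul_assoc, ← Finset.prod_mul_distrib]
        congr 1
        refine Finset.prod_congr rfl fun j _ => ?_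
        rw [hn2, ENNReal.mul_rpow_of_nonneg _ _ (by norm_num)]
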